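/- arXiv:2203.05162 — 3 statements merged into one kernel-verified Lean document; each statement's English description precedes it below -/
import Mathlib

section
/- Let K be a field, D a K-linear triangulated category with a split-generator, and Φ : D → D an exact endofunctor with Φ^N ≇ 0 for all N > 0. Then for every t ∈ ℝ, the categorical entropy of the opposite functor satisfies h_t^{D^op}(Φ^op) = h_{-t}^D(Φ), where D^op carries its natural triangulated structure with shift functor Σ_{D^op} = Σ_D^{-1}. -/
/-!
For all `E`, `F` the complexities already agree: `δ_t` of `(op E, op F)` in `Dᵒᵖ` equals `δ_{-t}` of
`(E, F)` in `D` (`complexityIn_op`). Since the shift of `Dᵒᵖ` is the inverse of that of `D`, exact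
triangles are reversed by `op`, and `(Φᵒᵖ)^N (op G) = op (Φ^N G)`, the entropies then agree too.

A filtration in `Dᵒᵖ`, read in `D`, is a tower of quotients `F = B_m → ⋯ → B_0 = 0` with fibres the
factors `X_i`, and the octahedral axiom would turn it into a filtration of `F` with the same factors
in reverse order. `Pretriangulated` does not include that axiom, but complexity only sees objects up
to direct summands, and the weaker statement that `F` is a *retract* of an object filtered by
`X_m, …, X_1` (`Cofilt.exists_filt`) needs only the completion of morphisms of triangles: one
builds filtered objects `L_j → F` such that every morphism to `F` killed by `F → B_{m-j}` lifts to
`L_j` (`exists_extension_lifting`). As `B_0 = 0`, the identity of `F` lifts to `L_m`. Applied in `D`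
and in `Dᵒᵖ`, this gives both inequalities.
-/

/- Common definitions: filtrations, categorical complexity and entropy,
(co-)t-structures, hearts/co-hearts, and associated entropy-type invariants. -/

open CategoryTheory CategoryTheory.Limits CategoryTheory.Pretriangulated Filter
open scoped ENNReal

universe w v u

namespace CatEnt

/-- Iterates of an endofunctor. -/
def iter {C : Type u} [Category.{v} C] (Φ : C ⥤ C) : ℕ → C ⥤ C
  | 0 => 𝟭 C
  | (n + 1) => iter Φ n ⋙ Φ

variable (C : Type u) [Category.{v} C] [Preadditive C] [HasZeroObject C]
  [HasShift C ℤ] [∀ n : ℤ, (shiftFunctor C n).Additive] [Pretriangulated C]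
  [HasFiniteBiproducts C]

/-- A filtration `0 = A 0 → A 1 → ⋯ → A m ≅ F` whose successive cones (factors)
are the objects `X i`, and all of whose objects lie in the class `S`. -/
def HasFiltrationIn (S : Set C) (F : C) {m : ℕ} (X : Fin m → C) : Prop :=
  ∃ A : Fin (m + 1) → C, IsZero (A 0) ∧ Nonempty (A (Fin.last m) ≅ F) ∧
    (∀ i, A i ∈ S) ∧
    ∀ i : Fin m, ∃ (f : A i.castSucc ⟶ A i.succ) (g : A i.succ ⟶ X i)
      (h : X i ⟶ (A i.castSucc)⟦(1 : ℤ)⟧), Triangle.mk f g h ∈ distTriang C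

/-- The categorical complexity `δ_t(E, F)` computed inside the class `S`:
the infimum of `∑ exp (k i * t)` over all filtrations of objects `F ⊞ F'`
(`F' ∈ S`) with factors the shifts `E⟦k i⟧`. -/
noncomputable def complexityIn (S : Set C) (t : ℝ) (E F : C) : ℝ≥0∞ :=
  sInf { c | ∃ (m : ℕ) (k : Fin m → ℤ) (F' : C), F' ∈ S ∧
    HasFiltrationIn C S (F ⊞ F') (fun i => E⟦k i⟧) ∧
    c = ENNReal.ofReal (∑ i, Real.exp ((k i : ℝ) * t)) }

/-- The categorical complexity `δ_t(E,F)` of Dimitrov–Haiden–Katzarkov–Kontsevich. -/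
noncomputable def complexity (t : ℝ) (E F : C) : ℝ≥0∞ :=
  complexityIn C Set.univ t E F

/-- `G` is a split-generator of the (triangulated sub)category determined by `S`. -/
def IsSplitGeneratorIn (S : Set C) (G : C) : Prop :=
  G ∈ S ∧ ∀ X ∈ S, ∃ (m : ℕ) (k : Fin m → ℤ) (F' : C), F' ∈ S ∧
    HasFiltrationIn C S (X ⊞ F') (fun i => G⟦k i⟧)

/-- `G` is a split-generator of `C`. -/
def IsSplitGenerator (G : C) : Prop := IsSplitGeneratorIn C Set.univ G

/-- The sequence `N ↦ (1/N) log (f N)`, with values in the extended reals. -/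
noncomputable def entSeq (f : ℕ → ℝ≥0∞) (N : ℕ) : EReal :=
  (((N : ℝ)⁻¹ : ℝ) : EReal) * ENNReal.log (f N)

/-- The categorical entropy of `Φ` restricted to `S`, computed with the
split-generator `G`: `limsup_N (1/N) log δ_t(G, Φ^N G)`. -/
noncomputable def entropyIn (S : Set C) (Φ : C ⥤ C) (G : C) (t : ℝ) : EReal :=
  Filter.limsup
    (entSeq (fun N => complexityIn C S t G ((iter Φ N).obj G))) Filter.atTop

/-- The categorical entropy `h_t(Φ)`, computed with the split-generator `G`. -/
noncomputable def entropy (Φ : C ⥤ C) (G : C) (t : ℝ) : EReal :=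
  entropyIn C Set.univ Φ G t

/-- `Φ^N` is not isomorphic to `0` on `S`, for all `N > 0`. -/
def PowersNonzeroOn (S : Set C) (Φ : C ⥤ C) : Prop :=
  ∀ N : ℕ, 0 < N → ∃ X ∈ S, ¬ IsZero ((iter Φ N).obj X)

/-- `Φ` maps the class `S` into itself. -/
def Preserves (S : Set C) (Φ : C ⥤ C) : Prop := ∀ X ∈ S, Φ.obj X ∈ S

section TStructure

/-- `(le, ge)` is a t-structure on the full triangulated subcategory of `C`
determined by `S` (take `S = Set.univ` for a t-structure on `C`). -/
structure IsTStructureIn (S le ge : Set C) : Prop where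
  le_sub : le ⊆ S
  ge_sub : ge ⊆ S
  le_iso : ∀ ⦃X Y : C⦄, (X ≅ Y) → X ∈ le → Y ∈ le
  ge_iso : ∀ ⦃X Y : C⦄, (X ≅ Y) → X ∈ ge → Y ∈ ge
  shift_le : ∀ X ∈ le, X⟦(1 : ℤ)⟧ ∈ le
  shift_ge : ∀ X ∈ ge, X⟦(-1 : ℤ)⟧ ∈ ge
  hom_zero : ∀ X ∈ le, ∀ Y : C, Y⟦(1 : ℤ)⟧ ∈ ge → ∀ f : X ⟶ Y, f = 0
  exists_triangle : ∀ E ∈ S, ∃ (D' F' : C), D' ∈ le ∧ F'⟦(1 : ℤ)⟧ ∈ ge ∧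
    ∃ (f : D' ⟶ E) (g : E ⟶ F') (h : F' ⟶ D'⟦(1 : ℤ)⟧),
      Triangle.mk f g h ∈ distTriang C

/-- Boundedness of a (co-)t-structure `(P, Q)` on the subcategory determined
by `S` : every object of `S` lies in some shift of `P` and in some shift of `Q`. -/
def IsBoundedIn (S P Q : Set C) : Prop :=
  ∀ E ∈ S, (∃ k : ℤ, E⟦k⟧ ∈ P) ∧ (∃ k : ℤ, E⟦k⟧ ∈ Q)

/-- The heart of a t-structure. -/
def heart (le ge : Set C) : Set C := le ∩ ge

/-- `X` is a simple object of the heart `H` : it is a nonzero object of `H`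
and in every extension `A → X → B` with `A, B ∈ H`, `A` or `B` vanishes. -/
def SimpleIn (H : Set C) (X : C) : Prop :=
  X ∈ H ∧ ¬ IsZero X ∧ ∀ A B : C, A ∈ H → B ∈ H →
    (∃ (f : A ⟶ X) (g : X ⟶ B) (h : B ⟶ A⟦(1 : ℤ)⟧),
      Triangle.mk f g h ∈ distTriang C) →
    IsZero A ∨ IsZero B

/-- `X` (an object of the heart `H`) has length `n`, i.e. admits a composition
series with `n` simple factors. -/
def HasLengthIn (H : Set C) (X : C) (n : ℕ) : Prop :=
  ∃ S : Fin n → C, (∀ i, SimpleIn C H (S i)) ∧ HasFiltrationIn C Set.univ X S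

/-- The heart `H` is finite : it is a length category having only finitely
many isomorphism classes of simple objects. -/
def FiniteHeart (H : Set C) : Prop :=
  (∀ X ∈ H, ∃ n : ℕ, HasLengthIn C H X n) ∧
  ∃ (n : ℕ) (S : Fin n → C), (∀ i, SimpleIn C H (S i)) ∧
    (∀ i j, i ≠ j → IsEmpty (S i ≅ S j)) ∧
    ∀ T, SimpleIn C H T → ∃ i, Nonempty (T ≅ S i)

/-- The invariant `δ̂_t` associated with a bounded t-structure with finite
heart `H` : the value `∑ λ(E i) * exp (k i * t)` on the (essentially unique)
t-filtration of `E`, with factors `(X i)⟦k i⟧`, `X i ∈ H`, `k` strictly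
decreasing (encoded as an infimum over all such filtrations). -/
noncomputable def tComplexity (H : Set C) (t : ℝ) (E : C) : ℝ≥0∞ :=
  sInf { c | ∃ (m : ℕ) (k : Fin m → ℤ) (X : Fin m → C) (lam : Fin m → ℕ),
    StrictAnti k ∧ (∀ i, X i ∈ H) ∧ (∀ i, HasLengthIn C H (X i) (lam i)) ∧
    HasFiltrationIn C Set.univ E (fun i => (X i)⟦k i⟧) ∧
    c = ENNReal.ofReal (∑ i, (lam i : ℝ) * Real.exp ((k i : ℝ) * t)) }

/-- The entropy-type invariant `ĥ_t` associated with a bounded t-structure with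
finite heart `H`, for the subcategory determined by `S` :
`sup_{E ∈ S} limsup_N (1/N) log δ̂_t(Φ^N E)`. -/
noncomputable def tEntropyIn (S H : Set C) (Φ : C ⥤ C) (t : ℝ) : EReal :=
  ⨆ E : {X : C // X ∈ S},
    Filter.limsup
      (entSeq (fun N => tComplexity C H t ((iter Φ N).obj E.1))) Filter.atTop

end TStructure

section CoTStructure

/-- `(ge, le)` is a co-t-structure on the full triangulated subcategory of `C`
determined by `S` (take `S = Set.univ` for a co-t-structure on `C`). -/
structure IsCoTStructureIn (S ge le : Set C) : Prop where
  ge_sub : ge ⊆ S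
  le_sub : le ⊆ S
  ge_iso : ∀ ⦃X Y : C⦄, (X ≅ Y) → X ∈ ge → Y ∈ ge
  le_iso : ∀ ⦃X Y : C⦄, (X ≅ Y) → X ∈ le → Y ∈ le
  ge_summand : ∀ X Y : C, (X ⊞ Y) ∈ ge → X ∈ ge
  le_summand : ∀ X Y : C, (X ⊞ Y) ∈ le → X ∈ le
  shift_ge : ∀ X ∈ ge, X⟦(-1 : ℤ)⟧ ∈ ge
  shift_le : ∀ X ∈ le, X⟦(1 : ℤ)⟧ ∈ le
  hom_zero : ∀ X : C, X⟦(1 : ℤ)⟧ ∈ ge → ∀ Y ∈ le, ∀ f : X ⟶ Y, f = 0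
  exists_triangle : ∀ E ∈ S, ∃ (D' F' : C), D'⟦(1 : ℤ)⟧ ∈ ge ∧ F' ∈ le ∧
    ∃ (f : D' ⟶ E) (g : E ⟶ F') (h : F' ⟶ D'⟦(1 : ℤ)⟧),
      Triangle.mk f g h ∈ distTriang C

/-- The co-heart of a co-t-structure. -/
def coheart (ge le : Set C) : Set C := ge ∩ le

/-- `X` is an indecomposable object of the co-heart `H`. -/
def IndecIn (H : Set C) (X : C) : Prop :=
  X ∈ H ∧ ¬ IsZero X ∧ ∀ A B : C, Nonempty (X ≅ A ⊞ B) → IsZero A ∨ IsZero B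

/-- `X` (an object of the co-heart `H`) is a direct sum of `n` indecomposable
objects, i.e. `σ(X) = n`. -/
def HasSummandCountIn (H : Set C) (X : C) (n : ℕ) : Prop :=
  ∃ M : Fin n → C, (∀ i, IndecIn C H (M i)) ∧ Nonempty (X ≅ ⨁ M)

/-- The co-heart `H` is finite : it is a Krull–Schmidt category (decompositions
into indecomposables exist and are essentially unique) having only finitely many
isomorphism classes of indecomposable objects. -/
def FiniteCoheart (H : Set C) : Prop :=
  (∀ X ∈ H, ∃ n : ℕ, HasSummandCountIn C H X n) ∧
  (∀ X ∈ H, ∀ (n m : ℕ) (M : Fin n → C) (N : Fin m → C),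
    (∀ i, IndecIn C H (M i)) → (∀ j, IndecIn C H (N j)) →
    Nonempty (X ≅ ⨁ M) → Nonempty (X ≅ ⨁ N) →
    ∃ e : Fin n ≃ Fin m, ∀ i, Nonempty (M i ≅ N (e i))) ∧
  ∃ (n : ℕ) (M : Fin n → C), (∀ i, IndecIn C H (M i)) ∧
    (∀ i j, i ≠ j → IsEmpty (M i ≅ M j)) ∧
    ∀ T, IndecIn C H T → ∃ i, Nonempty (T ≅ M i)

/-- The invariant `δ̌_t` associated with a bounded co-t-structure with finite
co-heart `H` : the infimum, over all co-t-filtrations of `E` (filtrations with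
factors `(X i)⟦k i⟧`, `X i ∈ H`, `k` strictly increasing), of
`∑ σ(X i) * exp (k i * t)`. -/
noncomputable def coComplexity (H : Set C) (t : ℝ) (E : C) : ℝ≥0∞ :=
  sInf { c | ∃ (m : ℕ) (k : Fin m → ℤ) (X : Fin m → C) (s : Fin m → ℕ),
    StrictMono k ∧ (∀ i, X i ∈ H) ∧ (∀ i, HasSummandCountIn C H (X i) (s i)) ∧
    HasFiltrationIn C Set.univ E (fun i => (X i)⟦k i⟧) ∧
    c = ENNReal.ofReal (∑ i, (s i : ℝ) * Real.exp ((k i : ℝ) * t)) }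

/-- The entropy-type invariant `ȟ_t` associated with a bounded co-t-structure
with finite co-heart `H`, for the subcategory determined by `S`. -/
noncomputable def coEntropyIn (S H : Set C) (Φ : C ⥤ C) (t : ℝ) : EReal :=
  ⨆ E : {X : C // X ∈ S},
    Filter.limsup
      (entSeq (fun N => coComplexity C H t ((iter Φ N).obj E.1))) Filter.atTop

end CoTStructure

end CatEnt

open CatEnt CategoryTheory.Pretriangulated.Opposite

namespace CatEnt

/-! ### Towers of quotients and filtrations -/

section Towers

variable {C : Type u} [Category.{v} C] [Preadditive C] [HasZeroObject C]
  [HasShift C ℤ] [∀ n : ℤ, (shiftFunctor C n).Additive] [Pretriangulated C]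

/-- `Filt E l A`: the object `A` is built from `0` by successive extensions
`A_{i-1} → A_i → X_i`, where `X_i ≅ E⟦k_i⟧` and `l` lists the integers `k_i`, the last one first. -/
inductive Filt (E : C) : List ℤ → C → Prop
  | zero (A : C) (hA : IsZero A) : Filt E [] A
  | step (l : List ℤ) (k : ℤ) (A A' X : C) (e : X ≅ E⟦k⟧) (f : A ⟶ A') (g : A' ⟶ X)
      (h : X ⟶ A⟦(1 : ℤ)⟧) (hT : Triangle.mk f g h ∈ distTriang C) (hA : Filt E l A) :
      Filt E (k :: l) A'

/-- `Cofilt E l B`: the object `B` is reduced to `0` by successively passing to quotients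
`X_i → B_i → B_{i-1}`, where `X_i ≅ E⟦k_i⟧` and `l` lists the integers `k_i`, the first quotient
taken first. This is the notion dual to `Filt`. -/
inductive Cofilt (E : C) : List ℤ → C → Prop
  | zero (B : C) (hB : IsZero B) : Cofilt E [] B
  | step (l : List ℤ) (k : ℤ) (X B B' : C) (e : X ≅ E⟦k⟧) (f : X ⟶ B) (g : B ⟶ B')
      (h : B' ⟶ X⟦(1 : ℤ)⟧) (hT : Triangle.mk f g h ∈ distTriang C) (hB : Cofilt E l B') :
      Cofilt E (k :: l) B

/-- One step of the conversion of a quotient tower of `F` into a filtration. Suppose that every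
morphism to `F` killed by `p : F ⟶ B` lifts along `g : L ⟶ F`. Given an exact triangle
`X → B → B'`, extend `L` by `X` to `L'`, with a map `g' : L' ⟶ F`; then every morphism killed by
`F → B → B'` lifts along `g'`. -/
lemma exists_extension_lifting {F L B X B' : C} (g : L ⟶ F) (p : F ⟶ B)
    (H : ∀ (W : C) (w : W ⟶ F), w ≫ p = 0 → ∃ y : W ⟶ L, y ≫ g = w)
    (a : X ⟶ B) (b : B ⟶ B') (c : B' ⟶ X⟦(1 : ℤ)⟧) (hT : Triangle.mk a b c ∈ distTriang C) :
    ∃ (L' : C) (f : L ⟶ L') (q : L' ⟶ X) (h : X ⟶ L⟦(1 : ℤ)⟧) (g' : L' ⟶ F),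
      Triangle.mk f q h ∈ distTriang C ∧
      ∀ (W : C) (w : W ⟶ F), w ≫ p ≫ b = 0 → ∃ y : W ⟶ L', y ≫ g' = w := by
  obtain ⟨Q, u, v, hQ⟩ := distinguished_cocone_triangle g
  -- The fibre of `p` lifts to `L`, so `u : F ⟶ Q` factors through `p`.
  obtain ⟨ρ, hρ⟩ : ∃ ρ : B ⟶ Q, u = p ≫ ρ := by
    obtain ⟨W, w, d, hW⟩ := distinguished_cocone_triangle₁ p
    obtain ⟨y, hy⟩ := H W w (comp_distTriang_mor_zero₁₂ _ hW)
    refine Triangle.yoneda_exact₂ _ hW u ?_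
    have hgu : g ≫ u = 0 := comp_distTriang_mor_zero₁₂ _ hQ
    change w ≫ u = 0
    rw [← hy, Category.assoc, hgu, comp_zero]
  obtain ⟨L', f, q, hL⟩ := distinguished_cocone_triangle₂ (a ≫ ρ ≫ v)
  obtain ⟨g', hg₁, hg₂⟩ : ∃ g' : L' ⟶ F, f ≫ g' = 𝟙 L ≫ g ∧ q ≫ a ≫ ρ = g' ≫ u := by
    refine complete_distinguished_triangle_morphism₂ _ _ hL hQ (𝟙 L) (a ≫ ρ) ?_
    change (a ≫ ρ ≫ v) ≫ (𝟙 L)⟦(1 : ℤ)⟧' = (a ≫ ρ) ≫ v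
    rw [CategoryTheory.Functor.map_id, Category.comp_id, Category.assoc]
  rw [Category.id_comp] at hg₁
  have huv : u ≫ v = 0 := comp_distTriang_mor_zero₂₃ _ hQ
  refine ⟨L', f, q, _, g', hL, fun W w hw => ?_⟩
  obtain ⟨x, hx⟩ : ∃ x : W ⟶ X, w ≫ p = x ≫ a :=
    Triangle.coyoneda_exact₂ _ hT (w ≫ p) ((Category.assoc _ _ _).trans hw)
  obtain ⟨y, hy⟩ : ∃ y : W ⟶ L', x = y ≫ q := by
    refine Triangle.coyoneda_exact₃ _ hL x ?_
    change x ≫ a ≫ ρ ≫ v = 0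
    rw [← reassoc_of% hx, ← reassoc_of% hρ, huv, comp_zero]
  -- `y ≫ g'` and `w` agree after `u`, hence differ by a morphism lifting to `L`.
  obtain ⟨z, hz⟩ : ∃ z : W ⟶ L, w - y ≫ g' = z ≫ g := by
    refine Triangle.coyoneda_exact₂ (Triangle.mk g u v) hQ (w - y ≫ g' : W ⟶ F) ?_
    change (w - y ≫ g') ≫ u = 0
    rw [Preadditive.sub_comp, Category.assoc, ← hg₂, ← reassoc_of% hy, ← reassoc_of% hx, ← hρ,
      sub_self]
  exact ⟨y + z ≫ f, by rw [Preadditive.add_comp, Category.assoc, hg₁, ← hz]; abel⟩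

/-- Iteration of `exists_extension_lifting` along a quotient tower of `B`. At the end of the tower
every morphism to `F` lifts, in particular the identity. -/
lemma Cofilt.exists_filt_lifting {E : C} {l : List ℤ} {B : C} (hB : Cofilt E l B) :
    ∀ {r : List ℤ} {F L : C} (g : L ⟶ F) (p : F ⟶ B), Filt E r L →
      (∀ (W : C) (w : W ⟶ F), w ≫ p = 0 → ∃ y : W ⟶ L, y ≫ g = w) →
      ∃ (L' : C), Filt E (l.reverse ++ r) L' ∧ Nonempty (Retract F L') := by
  induction hB with
  | zero B hB =>
    intro r F L g p hL H
    obtain ⟨y, hy⟩ := H F (𝟙 F) (hB.eq_of_tgt _ _)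
    exact ⟨L, by simpa using hL, ⟨⟨y, g, hy⟩⟩⟩
  | step l k X B B' e a b c hT hB ih =>
    intro r F L g p hL H
    obtain ⟨L', f, q, h, g', hL', H'⟩ := exists_extension_lifting g p H a b c hT
    obtain ⟨L'', h₁, h₂⟩ := ih g' (p ≫ b) (.step _ k _ _ _ e f q h hL' hL) H'
    exact ⟨L'', by simpa using h₁, h₂⟩

/-- An object with a quotient tower is a retract of one with a filtration having the same factors
in the opposite order. (With the octahedral axiom it would have such a filtration itself.) -/
lemma Cofilt.exists_filt {E : C} {l : List ℤ} {B : C} (hB : Cofilt E l B) :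
    ∃ L : C, Filt E l.reverse L ∧ Nonempty (Retract B L) := by
  obtain ⟨Z, hZ⟩ := HasZeroObject.zero (C := C)
  obtain ⟨L, h₁, h₂⟩ := hB.exists_filt_lifting (r := []) (0 : Z ⟶ B) (𝟙 B)
    (.zero Z hZ) (fun W w hw => ⟨0, by simpa using hw.symm⟩)
  exact ⟨L, by simpa using h₁, h₂⟩

lemma mk_mem_distTriang_of_iso {A B X B' X' : C} {f : A ⟶ B} {g : B ⟶ X} {h : X ⟶ A⟦(1 : ℤ)⟧}
    (hT : Triangle.mk f g h ∈ distTriang C) (e : B ≅ B') (e' : X ≅ X') :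
    Triangle.mk (f ≫ e.hom) (e.inv ≫ g ≫ e'.hom) (e'.inv ≫ h) ∈ distTriang C := by
  refine isomorphic_distinguished _ hT _
    (Triangle.isoMk _ _ (Iso.refl A) e.symm e'.symm ?_ ?_ ?_)
  · change (f ≫ e.hom) ≫ e.inv = 𝟙 A ≫ f
    simp
  · change (e.inv ≫ g ≫ e'.hom) ≫ e'.inv = e.inv ≫ g
    simp
  · change (e'.inv ≫ h) ≫ (𝟙 A)⟦(1 : ℤ)⟧' = e'.inv ≫ h
    simp

lemma Filt.of_iso {E : C} {l : List ℤ} {A A' : C} (h : Filt E l A) (e : A ≅ A') :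
    Filt E l A' := by
  cases h with
  | zero _ hA => exact .zero _ (hA.of_iso e.symm)
  | step l k A _ X i f g h hT hA =>
    exact .step l k A A' X i _ _ _ (mk_mem_distTriang_of_iso hT e (Iso.refl X)) hA

/-- `A'` is an extension of `E⟦k⟧` by `A`. -/
def IsStep (E A : C) (k : ℤ) (A' : C) : Prop :=
  ∃ (f : A ⟶ A') (g : A' ⟶ E⟦k⟧) (h : E⟦k⟧ ⟶ A⟦(1 : ℤ)⟧), Triangle.mk f g h ∈ distTriang C

/-- A filtration indexed by `Fin` gives a `Filt`. As only sums over the shifts matter, the order of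
the list is forgotten. -/
lemma filt_of_chain (E : C) : ∀ {m : ℕ} (k : Fin m → ℤ) (A : Fin (m + 1) → C), IsZero (A 0) →
    (∀ i : Fin m, IsStep E (A i.castSucc) (k i) (A i.succ)) →
    ∃ l : List ℤ, Filt E l (A (Fin.last m)) ∧
      ∀ φ : ℤ → ℝ, (l.map φ).sum = ∑ i, φ (k i) := by
  intro m
  induction m with
  | zero => exact fun k A hA _ => ⟨[], .zero _ hA, by simp⟩
  | succ m ih =>
    intro k A hA hT
    obtain ⟨l, hl, hs⟩ := ih (fun i => k i.castSucc) (fun i => A i.castSucc) hA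
      (fun i => hT i.castSucc)
    obtain ⟨f, g, h, hT'⟩ := hT (Fin.last m)
    refine ⟨k (Fin.last m) :: l, .step _ _ _ _ _ (Iso.refl _) f g h hT' hl, fun φ => ?_⟩
    rw [Fin.sum_univ_castSucc, List.map_cons, List.sum_cons, hs, add_comm]

lemma Filt.exists_chain {E : C} {l : List ℤ} {A : C} (hA : Filt E l A) :
    ∃ (m : ℕ) (k : Fin m → ℤ) (A' : Fin (m + 1) → C), IsZero (A' 0) ∧ A' (Fin.last m) = A ∧
      (∀ i : Fin m, IsStep E (A' i.castSucc) (k i) (A' i.succ)) ∧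
      ∀ φ : ℤ → ℝ, (l.map φ).sum = ∑ i, φ (k i) := by
  induction hA with
  | zero A hA => exact ⟨0, Fin.elim0, fun _ => A, hA, rfl, fun i => i.elim0, by simp⟩
  | step l k A A₁ X e f g h hT _ ih =>
    obtain ⟨m, κ, A', h₀, rfl, hT', hs⟩ := ih
    refine ⟨m + 1, Fin.snoc (α := fun _ => ℤ) κ k, Fin.snoc (α := fun _ => C) A' A₁,
      ?_, Fin.snoc_last .., ?_, ?_⟩
    · have : Fin.snoc (α := fun _ => C) A' A₁ (Fin.castSucc 0) = A' 0 := Fin.snoc_castSucc ..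
      rw [← Fin.castSucc_zero, this]
      exact h₀
    · intro i
      induction i using Fin.lastCases with
      | last =>
        rw [Fin.succ_last]
        simp only [Fin.snoc_last, Fin.snoc_castSucc]
        exact ⟨_, _, _, mk_mem_distTriang_of_iso hT (Iso.refl _) e⟩
      | cast j =>
        rw [Fin.succ_castSucc]
        simp only [Fin.snoc_castSucc]
        exact hT' j
    · intro φ
      rw [Fin.sum_univ_castSucc, List.map_cons, List.sum_cons, hs, add_comm]
      simp

lemma exists_iso_biprod_of_retract [HasFiniteBiproducts C] {F A : C} (r : Retract F A) :
    ∃ F' : C, Nonempty (A ≅ F ⊞ F') := by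
  obtain ⟨Z, g, h, hT⟩ := distinguished_cocone_triangle r.i
  -- The map `r.i` is a split monomorphism, so the connecting morphism of its cone vanishes.
  have hh : h = 0 := by
    have h₁ : h ≫ r.i⟦(1 : ℤ)⟧' = 0 := comp_distTriang_mor_zero₃₁ _ hT
    have h₂ : h ≫ r.i⟦(1 : ℤ)⟧' ≫ r.r⟦(1 : ℤ)⟧' = h := by
      rw [← Functor.map_comp, r.retract, CategoryTheory.Functor.map_id, Category.comp_id]
    rw [← h₂, reassoc_of% h₁, zero_comp]
  obtain ⟨e, -, -⟩ := exists_iso_binaryBiproduct_of_distTriang _ hT hh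
  exact ⟨Z, ⟨e⟩⟩

/-- The complexity is an infimum over the filtered objects of which `F` is a retract. -/
lemma complexityIn_univ_eq [HasFiniteBiproducts C] (t : ℝ) (E F : C) :
    complexityIn C Set.univ t E F = sInf { c | ∃ (l : List ℤ) (A : C), Filt E l A ∧
      Nonempty (Retract F A) ∧
      c = ENNReal.ofReal (l.map fun k : ℤ => Real.exp ((k : ℝ) * t)).sum } := by
  unfold complexityIn
  congr 1
  ext c
  constructor
  · rintro ⟨m, k, F', -, ⟨A, h₀, ⟨e⟩, -, hT⟩, rfl⟩
    obtain ⟨l, hl, hs⟩ := filt_of_chain E k A h₀ hT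
    exact ⟨l, F ⊞ F', hl.of_iso e, ⟨⟨biprod.inl, biprod.fst, by simp⟩⟩, by rw [hs]⟩
  · rintro ⟨l, A, hA, ⟨r⟩, rfl⟩
    obtain ⟨m, k, A', h₀, rfl, hT, hs⟩ := hA.exists_chain
    obtain ⟨F', ⟨e⟩⟩ := exists_iso_biprod_of_retract r
    exact ⟨m, k, F', Set.mem_univ _, ⟨A', h₀, ⟨e⟩, fun _ => Set.mem_univ _, hT⟩, by rw [hs]⟩

end Towers

/-! ### Passage to the opposite category -/

section Opposite

variable {C : Type u} [Category.{v} C] [Preadditive C] [HasZeroObject C]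
  [HasShift C ℤ] [∀ n : ℤ, (shiftFunctor C n).Additive] [Pretriangulated C]

lemma Filt.op {E : C} {l : List ℤ} {A : C} (hA : Filt E l A) :
    Cofilt (Opposite.op E) (l.map fun k => -k) (Opposite.op A) := by
  induction hA with
  | zero A hA => exact .zero _ hA.op
  | step l k A A' X e f g h hT _ ih =>
    exact .step _ (-k) (Opposite.op X) _ (Opposite.op A)
      (e.symm.op ≪≫ ((shiftFunctorOpIso C (-k) k (by lia)).app (Opposite.op E)).symm)
      _ _ _ (op_distinguished _ hT) ih

lemma Filt.unop {E : C} {l : List ℤ} {A : Cᵒᵖ} (hA : Filt (Opposite.op E) l A) :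
    Cofilt E (l.map fun k => -k) A.unop := by
  induction hA with
  | zero A hA => exact .zero _ hA.unop
  | step l k A A' X e f g h hT _ ih =>
    exact .step _ (-k) X.unop _ A.unop
      (e ≪≫ (shiftFunctorOpIso C k (-k) (by lia)).app (Opposite.op E)).symm.unop
      _ _ _ (unop_distinguished _ hT) ih

lemma sum_exp_reverse_neg (l : List ℤ) (t : ℝ) :
    ((l.map fun k => -k).reverse.map fun k : ℤ => Real.exp ((k : ℝ) * t)).sum =
      (l.map fun k : ℤ => Real.exp ((k : ℝ) * -t)).sum := by
  rw [List.map_reverse, List.sum_reverse, List.map_map]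
  simp [Function.comp_def]

/-- Retracts of filtered objects in `Cᵒᵖ` and in `C` correspond, with opposite shifts. -/
lemma complexityIn_op [HasFiniteBiproducts C] [HasFiniteBiproducts Cᵒᵖ] (t : ℝ) (E F : C) :
    complexityIn Cᵒᵖ Set.univ t (Opposite.op E) (Opposite.op F) =
      complexityIn C Set.univ (-t) E F := by
  rw [complexityIn_univ_eq, complexityIn_univ_eq]
  congr 1
  ext c
  constructor
  · rintro ⟨l, A, hA, ⟨r⟩, rfl⟩
    obtain ⟨L, hL, ⟨r'⟩⟩ := hA.unop.exists_filt
    refine ⟨_, L, hL, ⟨Retract.trans ⟨r.r.unop, r.i.unop, ?_⟩ r'⟩, ?_⟩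
    · rw [← unop_comp, r.retract]; rfl
    · rw [sum_exp_reverse_neg, neg_neg]
  · rintro ⟨l, A, hA, ⟨r⟩, rfl⟩
    obtain ⟨L, hL, ⟨r'⟩⟩ := hA.op.exists_filt
    refine ⟨_, L, hL, ⟨Retract.trans ⟨r.r.op, r.i.op, ?_⟩ r'⟩, ?_⟩
    · rw [← op_comp, r.retract]; rfl
    · rw [sum_exp_reverse_neg]

lemma iter_op_obj {C : Type u} [Category.{v} C] (Φ : C ⥤ C) (N : ℕ) (X : C) :
    (iter Φ.op N).obj (Opposite.op X) = Opposite.op ((iter Φ N).obj X) := by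
  induction N with
  | zero => rfl
  | succ N ih =>
    change Φ.op.obj ((iter Φ.op N).obj (Opposite.op X)) = _
    rw [ih]
    rfl

end Opposite

end CatEnt

/-- For a `K`-linear triangulated category `D` with a split-generator
and an exact endofunctor `Φ` with `Φ^N ≇ 0` for all `N > 0`, the categorical entropy
of the opposite functor satisfies `h_t^{Dᵒᵖ}(Φᵒᵖ) = h_{-t}^D(Φ)`. -/
theorem entropy_of_op_functor
    (K : Type w) [Field K]
    (D : Type u) [Category.{v} D] [Preadditive D] [CategoryTheory.Linear K D]
    [HasZeroObject D] [HasShift D ℤ] [∀ n : ℤ, (shiftFunctor D n).Additive]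
    [Pretriangulated D] [HasFiniteBiproducts D] [HasFiniteBiproducts Dᵒᵖ]
    (Φ : D ⥤ D) [Φ.CommShift ℤ] [Φ.IsTriangulated]
    (hΦ : PowersNonzeroOn D Set.univ Φ)
    (G : D) (hG : IsSplitGenerator D G)
    (hGop : IsSplitGenerator Dᵒᵖ (Opposite.op G))
    (t : ℝ) :
    entropy Dᵒᵖ Φ.op (Opposite.op G) t = entropy D Φ G (-t) := by
  have h : (fun N => complexityIn Dᵒᵖ Set.univ t (Opposite.op G)
      ((iter Φ.op N).obj (Opposite.op G))) =
      fun N => complexityIn D Set.univ (-t) G ((iter Φ N).obj G) := by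
    funext N
    rw [iter_op_obj, complexityIn_op]
  unfold entropy entropyIn
  rw [h]
end

section
/- Let K be a field, D a K-linear idempotent complete triangulated category, and 𝔞 a bounded t-structure on D with finite heart. If D' → E → F → ΣD' is an exact triangle in D, then δ̂_t^𝔞(E) ≤ δ̂_t^𝔞(D') + δ̂_t^𝔞(F) for every t ∈ ℝ. -/
/-!
The value `δ̂_t(E)` is the weighted total length `∑ₙ λ(Hⁿ(E)) e^{-nt}` of the cohomology of `E` for the
t-structure (`HeartAux.cx`), and this sum is subadditive on exact triangles because the cohomology
`X ↦ H⁰(X)`, with values in the heart, is half exact.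

* The heart is an abelian category whose short exact sequences are the exact triangles with vertices
  in the heart, so the lengths defined by filtrations are lengths in the usual sense
  (`HeartAux.hasLen_of_hasLengthIn`, `HeartAux.hasLengthIn_of_hasLen`). Length is subadditive on
  exact sequences and monotone for subobjects and quotients.
* For an exact triangle `X ⟶ Y ⟶ Z ⟶`, `λ(H⁰(Y)) ≤ λ(H⁰(X)) + λ(H⁰(Z))` (`HeartAux.len_H0_le`), hence
  `cx` is subadditive (`HeartAux.cx_tri`).
* By subadditivity, `cx E` is at most the weight of any t-filtration
  (`HeartAux.cx_le_tComplexity`), while the filtration of `E` by its truncations has weight at most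
  `cx E` (`HeartAux.tComplexity_le_cx`).

The category is only assumed pretriangulated, so all arguments avoid the octahedral axiom: in
particular half exactness and the computation of the cones of truncations are obtained by chasing
maps out of objects `≤ n`.
-/

/- Common definitions: filtrations, categorical complexity and entropy,
(co-)t-structures, hearts/co-hearts, and associated entropy-type invariants. -/

open CategoryTheory CategoryTheory.Limits CategoryTheory.Pretriangulated Filter
open scoped ENNReal

universe w v u

open CatEnt

namespace HeartAux

open Triangulated AbelianSubcategory
open scoped ZeroObject

set_option linter.unusedSectionVars false

/-! ### The heart of a t-structure is abelian -/

section AbelianHeart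

variable {C : Type u} [Category.{v} C] [Preadditive C] [HasZeroObject C]
  [HasShift C ℤ] [∀ n : ℤ, (shiftFunctor C n).Additive] [Pretriangulated C] [HasFiniteBiproducts C]
  (t : TStructure C)

/-- Distinguished triangles are stable under isomorphism, unbundled. -/
lemma mem_of_iso {X Y Z X' Y' Z' : C} {f : X ⟶ Y} {g : Y ⟶ Z} {h : Z ⟶ X⟦(1 : ℤ)⟧}
    {f' : X' ⟶ Y'} {g' : Y' ⟶ Z'} {h' : Z' ⟶ X'⟦(1 : ℤ)⟧}
    (hT : Triangle.mk f g h ∈ distTriang C) (e₁ : X' ≅ X) (e₂ : Y' ≅ Y) (e₃ : Z' ≅ Z)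
    (c₁ : f' ≫ e₂.hom = e₁.hom ≫ f) (c₂ : g' ≫ e₃.hom = e₂.hom ≫ g)
    (c₃ : h' ≫ e₁.hom⟦(1 : ℤ)⟧' = e₃.hom ≫ h) :
    Triangle.mk f' g' h' ∈ distTriang C :=
  isomorphic_distinguished _ hT _ (Triangle.isoMk _ _ e₁ e₂ e₃ c₁ c₂ c₃)

/-- The heart of `t`, as a category. -/
abbrev Ht := t.heart.FullSubcategory

lemma isLE_third {T : Triangle C} (hT : T ∈ distTriang C) (n : ℤ)
    (h₁ : t.IsLE T.obj₁ (n + 1)) (h₂ : t.IsLE T.obj₂ n) : t.IsLE T.obj₃ n :=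
  t.isLE₂ _ (rot_of_distTriang _ hT) n h₂ (t.isLE_shift T.obj₁ (n + 1) 1 n)

lemma isGE_third {T : Triangle C} (hT : T ∈ distTriang C) (n : ℤ)
    (h₁ : t.IsGE T.obj₁ (n + 1)) (h₂ : t.IsGE T.obj₂ n) : t.IsGE T.obj₃ n :=
  t.isGE₂ _ (rot_of_distTriang _ hT) n h₂ (t.isGE_shift T.obj₁ (n + 1) 1 n)

lemma isGE_first {T : Triangle C} (hT : T ∈ distTriang C) (n : ℤ)
    (h₂ : t.IsGE T.obj₂ n) (h₃ : t.IsGE T.obj₃ (n - 1)) : t.IsGE T.obj₁ n :=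
  t.isGE₂ _ (inv_rot_of_distTriang _ hT) n (t.isGE_shift T.obj₃ (n - 1) (-1) n) h₂

lemma isLE_first {T : Triangle C} (hT : T ∈ distTriang C) (n : ℤ)
    (h₂ : t.IsLE T.obj₂ n) (h₃ : t.IsLE T.obj₃ (n - 1)) : t.IsLE T.obj₁ n :=
  t.isLE₂ _ (inv_rot_of_distTriang _ hT) n (t.isLE_shift T.obj₃ (n - 1) (-1) n) h₂

variable {t}

instance (X : Ht t) : t.IsLE (t.heart.ι.obj X) 0 := ⟨X.2.1⟩
instance (X : Ht t) : t.IsGE (t.heart.ι.obj X) 0 := ⟨X.2.2⟩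
instance (X : Ht t) : t.IsLE X.obj 0 := ⟨X.2.1⟩
instance (X : Ht t) : t.IsGE X.obj 0 := ⟨X.2.2⟩

/-- An object of the heart, from an object which is both `≤ 0` and `≥ 0`. -/
abbrev mkHt (X : C) (h₁ : t.IsLE X 0) (h₂ : t.IsGE X 0) : Ht t := ⟨X, h₁.le, h₂.ge⟩

/-- There are no maps of negative degree between objects of the heart. This is the hypothesis of
Mathlib's construction of kernels and cokernels in `AbelianSubcategory`. -/
lemma hom_neg ⦃X Y : Ht t⦄ ⦃n : ℤ⦄ (f : t.heart.ι.obj X ⟶ (t.heart.ι.obj Y)⟦n⟧) (hn : n < 0) :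
    f = 0 := by
  have : t.IsGE ((t.heart.ι.obj Y)⟦n⟧) (-n) := t.isGE_shift _ 0 n (-n)
  exact t.zero f 0 (-n)

lemma exists_iso_shift (X : C) (n : ℤ) : Nonempty ((X⟦n⟧)⟦-n⟧ ≅ X) :=
  ⟨(shiftEquiv C n).unitIso.symm.app X⟩

lemma exists_iso_shift' (X : C) (n : ℤ) : Nonempty ((X⟦-n⟧)⟦n⟧ ≅ X) :=
  ⟨(shiftEquiv C n).counitIso.app X⟩

/-- Every morphism of the heart has a cone which is an extension of an object of the heart by the
shift of an object of the heart: truncate the cone, which lies in degrees `-1` and `0`. -/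
lemma admissible_eq_top : admissibleMorphism t.heart.ι = ⊤ := by
  ext X₁ X₂ f
  simp only [MorphismProperty.top_apply, iff_true]
  intro X₃ f₂ f₃ hT
  have hle : t.IsLE X₃ 0 := isLE_third t hT 0 (t.isLE_of_le (t.heart.ι.obj X₁) 0 1)
    (inferInstanceAs (t.IsLE (t.heart.ι.obj X₂) 0))
  have hge : t.IsGE X₃ (-1) := isGE_third t hT (-1)
    (inferInstanceAs (t.IsGE (t.heart.ι.obj X₁) 0)) (t.isGE_of_ge (t.heart.ι.obj X₂) (-1) 0)
  have hT' := t.triangleLTGE_distinguished 0 X₃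
  have h1 : t.IsGE ((t.truncLT 0).obj X₃) (-1) := isGE_first t hT' (-1) hge
    (t.isGE_of_ge ((t.truncGE 0).obj X₃) (-1 - 1) 0)
  have h2 : t.IsLE ((t.truncLT 0).obj X₃) (-1) := t.isLE_truncLT_obj _ _ _
  have h3 : t.IsLE ((t.truncGE 0).obj X₃) 0 := isLE_third t hT' 0
    (t.isLE_of_le ((t.truncLT 0).obj X₃) (-1) (0 + 1)) hle
  have h1' : t.IsGE (((t.truncLT 0).obj X₃)⟦(-1 : ℤ)⟧) 0 := t.isGE_shift _ (-1) (-1) 0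
  have h2' : t.IsLE (((t.truncLT 0).obj X₃)⟦(-1 : ℤ)⟧) 0 := t.isLE_shift _ (-1) (-1) 0
  obtain ⟨e⟩ := exists_iso_shift' ((t.truncLT 0).obj X₃) 1
  refine ⟨mkHt _ h2' h1', mkHt _ h3 inferInstance, e.hom ≫ (t.truncLTι 0).app X₃,
    (t.truncGEπ 0).app X₃, (t.truncGEδLT 0).app X₃ ≫ e.inv⟦1⟧', ?_⟩
  refine mem_of_iso hT' e (Iso.refl _) (Iso.refl _) ?_ ?_ ?_
  · simp
  · simp
  · simp [← Functor.map_comp]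

instance : HasKernels (Ht t) where
  has_limit f := hasKernel_of_admissibleMorphism hom_neg f (by simp [admissible_eq_top])

instance : HasCokernels (Ht t) where
  has_colimit f := hasCokernel_of_admissibleMorphism hom_neg f (by simp [admissible_eq_top])

lemma isZero_of_id_eq_zero {X : Ht t} (h : 𝟙 X = 0) : IsZero X :=
  (IsZero.iff_id_eq_zero X).2 h

instance : HasZeroObject (Ht t) :=
  ⟨mkHt (0 : C) inferInstance inferInstance, (IsZero.iff_id_eq_zero _).2
    (t.heart.ι.map_injective ((isZero_zero C).eq_of_src _ _))⟩

instance : t.heart.IsClosedUnderLimitsOfShape (Discrete WalkingPair) where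
  limitsOfShape_le := by
    rintro X ⟨p⟩
    have hl := p.prop_diag_obj (.mk .left)
    have hr := p.prop_diag_obj (.mk .right)
    rw [TStructure.mem_heart_iff] at hl hr
    have hT := binaryProductTriangle_distinguished (p.diag.obj (.mk .left)) (p.diag.obj (.mk .right))
    refine t.heart.prop_of_iso ?_ ((t.mem_heart_iff _).2
      ⟨t.isLE₂ _ hT 0 hl.1 hr.1, t.isGE₂ _ hT 0 hl.2 hr.2⟩)
    exact IsLimit.conePointUniqueUpToIso (prodIsProd _ _)
      ((IsLimit.postcomposeHomEquiv (diagramIsoPair p.diag) _).2 p.isLimit)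

instance : HasFiniteProducts (Ht t) := by
  have : HasBinaryProducts (Ht t) := hasLimitsOfShape_of_closedUnderLimits _ _
  exact hasFiniteProducts_of_has_binary_and_terminal

lemma exists_triangle_of_mono {X Y : Ht t} (f : X ⟶ Y) [Mono f] :
    ∃ (Q : Ht t) (p : Y ⟶ Q) (δ : t.heart.ι.obj Q ⟶ (t.heart.ι.obj X)⟦(1 : ℤ)⟧),
      Triangle.mk (t.heart.ι.map f) (t.heart.ι.map p) δ ∈ distTriang C := by
  obtain ⟨X₃, f₂, f₃, hT⟩ := distinguished_cocone_triangle (t.heart.ι.map f)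
  have : admissibleMorphism t.heart.ι f := by simp [admissible_eq_top]
  obtain ⟨K, Q, α, β, γ, hT'⟩ := this f₂ f₃ hT
  -- the kernel part `K` of the cone of `f` vanishes, so the cone is its cokernel part `Q`
  have hm := mono_ιK hom_neg hT hT'
  have hK : 𝟙 K = 0 := by
    rw [← cancel_mono (ιK f₃ α), ← cancel_mono f]
    simp [ιK_mor₁ hT α]
  have hz : IsZero ((t.heart.ι.obj K)⟦(1 : ℤ)⟧) := by
    exact (shiftFunctor C (1 : ℤ)).map_isZero (t.heart.ι.map_isZero (isZero_of_id_eq_zero hK))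
  have : IsIso β := (Triangle.isZero₁_iff_isIso₂ _ hT').1 hz
  refine ⟨Q, πQ f₂ β, inv β ≫ f₃, ?_⟩
  refine mem_of_iso hT (Iso.refl _) (Iso.refl _) (asIso β).symm (by simp) ?_ (by simp)
  rw [show t.heart.ι.map (πQ f₂ β) = f₂ ≫ β from t.heart.ι.map_preimage _]
  simp

lemma exists_triangle_of_epi {X Y : Ht t} (f : X ⟶ Y) [Epi f] :
    ∃ (K : Ht t) (i : K ⟶ X) (δ : t.heart.ι.obj Y ⟶ (t.heart.ι.obj K)⟦(1 : ℤ)⟧),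
      Triangle.mk (t.heart.ι.map i) (t.heart.ι.map f) δ ∈ distTriang C :=
  exists_distinguished_triangle_of_epi hom_neg admissible_eq_top f

/-- The heart is abelian even without the octahedral axiom: a monomorphism (resp. epimorphism) of
the heart completes to a distinguished triangle in the heart, hence is a kernel (resp. a
cokernel). -/
noncomputable instance : Abelian (Ht t) where
  normalMonoOfMono f _ := by
    obtain ⟨Q, p, δ, hT⟩ := exists_triangle_of_mono f
    exact ⟨⟨Q, p, _, isLimitKernelForkOfDistTriang hom_neg f p δ hT⟩⟩
  normalEpiOfEpi f _ := by
    obtain ⟨K, i, δ, hT⟩ := exists_triangle_of_epi f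
    exact ⟨⟨K, i, _, isColimitCokernelCoforkOfDistTriang hom_neg i f δ hT⟩⟩

end AbelianHeart

/-! ### Length in an abelian category -/

section Length

variable {A : Type*} [Category* A] [Abelian A]

/-- `X` has a composition series with `n` simple factors. -/
def HasLen (X : A) : ℕ → Prop := fun n => match n with
  | 0 => IsZero X
  | n + 1 => ∃ (B S : A) (i : B ⟶ X) (p : X ⟶ S) (w : i ≫ p = 0),
      Simple S ∧ (ShortComplex.mk i p w).ShortExact ∧ HasLen B n

/-- It suffices that maps killed by `p` factor through `i`: the factorization is unique as `i` is
mono. -/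
lemma shortExact_of_lift {X Y Z : A} (i : X ⟶ Y) (p : Y ⟶ Z) [Mono i] [Epi p] (w : i ≫ p = 0)
    (h : ∀ (T : A) (k : T ⟶ Y), k ≫ p = 0 → ∃ l : T ⟶ X, l ≫ i = k) :
    (ShortComplex.mk i p w).ShortExact := by
  refine { exact := ShortComplex.exact_of_f_is_kernel _ ?_ }
  exact KernelFork.IsLimit.ofι' i w fun {T} k hk => ⟨(h T k hk).choose, (h T k hk).choose_spec⟩

lemma shortExact_kernel {X Y : A} (p : X ⟶ Y) [Epi p] :
    (ShortComplex.mk (kernel.ι p) p (kernel.condition p)).ShortExact :=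
  shortExact_of_lift _ _ _ fun _ k hk => ⟨kernel.lift _ k hk, by simp⟩

/-- A subobject of an object of length `n` has length at most `n`: intersect with the top step
`Y ⟶ X ⟶ S` of a composition series. -/
lemma HasLen.sub {n : ℕ} : ∀ {X B : A} (_ : HasLen X n) (f : B ⟶ X) [Mono f],
    ∃ m ≤ n, HasLen B m := by
  induction n with
  | zero => exact fun h f _ => ⟨0, le_rfl, IsZero.of_mono f h⟩
  | succ n ih =>
    rintro X B ⟨Y, S, i, p, w, hS, hE, hY⟩ f _
    have := hE.mono_f
    by_cases hq : f ≫ p = 0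
    · have hl : hE.exact.lift f hq ≫ i = f := hE.exact.lift_f f hq
      have : Mono (hE.exact.lift f hq ≫ i) := by rw [hl]; infer_instance
      have : Mono (hE.exact.lift f hq) := mono_of_mono _ i
      obtain ⟨m, hm, h⟩ := ih hY (hE.exact.lift f hq)
      exact ⟨m, by omega, h⟩
    · have : Epi (f ≫ p) := epi_of_nonzero_to_simple hq
      have hk : (kernel.ι (f ≫ p) ≫ f) ≫ p = 0 := by simp
      have hl : hE.exact.lift _ hk ≫ i = _ := hE.exact.lift_f _ hk
      have : Mono (hE.exact.lift _ hk ≫ i) := by rw [hl]; infer_instance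
      have : Mono (hE.exact.lift _ hk) := mono_of_mono _ i
      obtain ⟨m, hm, h⟩ := ih hY (hE.exact.lift _ hk)
      exact ⟨m + 1, by omega, _, S, _, f ≫ p, _, hS, shortExact_kernel _, h⟩

/-- A quotient of an object of length `n` has length at most `n`: the image of the top step
`Y ⟶ X ⟶ S` in `B` has cokernel a quotient of `S`, hence zero or simple. -/
lemma HasLen.quot {n : ℕ} : ∀ {X B : A} (_ : HasLen X n) (f : X ⟶ B) [Epi f],
    ∃ m ≤ n, HasLen B m := by
  induction n with
  | zero => exact fun h f _ => ⟨0, le_rfl, IsZero.of_epi f h⟩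
  | succ n ih =>
    rintro X B ⟨Y, S, i, p, w, hS, hE, hY⟩ f _
    have := hE.epi_g
    have hk : i ≫ f ≫ cokernel.π (i ≫ f) = 0 := by
      rw [← Category.assoc, cokernel.condition]
    have hd : p ≫ hE.exact.desc _ hk = f ≫ cokernel.π (i ≫ f) := hE.exact.g_desc _ hk
    have : Epi (p ≫ hE.exact.desc _ hk) := by rw [hd]; infer_instance
    have hepi : Epi (hE.exact.desc _ hk) := epi_of_epi p _
    by_cases hz : hE.exact.desc _ hk = 0
    · rw [hz, comp_zero] at hd
      have h0 : cokernel.π (i ≫ f) = 0 := by rw [← cancel_epi f, ← hd, comp_zero]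
      have : Epi (i ≫ f) := Preadditive.epi_of_cokernel_zero h0
      obtain ⟨m, hm, h⟩ := ih hY (i ≫ f)
      exact ⟨m, by omega, h⟩
    · have : Mono (hE.exact.desc _ hk) := mono_of_nonzero_from_simple hz
      have : IsIso (hE.exact.desc _ hk) := isIso_of_mono_of_epi _
      have hS' : Simple (cokernel (i ≫ f)) := Simple.of_iso (asIso (hE.exact.desc _ hk)).symm
      obtain ⟨m, hm, h⟩ := ih hY (Abelian.factorThruImage (i ≫ f))
      refine ⟨m + 1, by omega, Abelian.image (i ≫ f), cokernel (i ≫ f), Abelian.image.ι _,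
        cokernel.π _, kernel.condition _, hS', shortExact_kernel _, h⟩

/-- Length is subadditive on short exact sequences: pull back a composition series of the quotient.
-/
lemma HasLen.ext {b : ℕ} : ∀ {S : ShortComplex A} (_ : S.ShortExact) {a : ℕ}
    (_ : HasLen S.X₁ a) (_ : HasLen S.X₃ b), ∃ m ≤ a + b, HasLen S.X₂ m := by
  induction b with
  | zero =>
    intro S hS a h₁ h₃
    have : Epi S.f := hS.exact.epi_f (IsZero.eq_of_tgt h₃ _ _)
    exact h₁.quot S.f
  | succ b ih =>
    rintro S hS a h₁ ⟨Y, T, i, p, w, hT, hE, hY⟩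
    have := hS.mono_f
    have := hS.epi_g
    have := hE.mono_f
    have : Epi p := hE.epi_g
    -- `K` is the preimage of `Y` in `S.X₂`; it is an extension of `Y` by `S.X₁`, with quotient `T`
    let K := pullback S.g i
    let j : S.X₁ ⟶ K := pullback.lift S.f 0 (by simp)
    have hj : j ≫ pullback.fst S.g i = S.f := pullback.lift_fst _ _ _
    have hj' : j ≫ pullback.snd S.g i = 0 := pullback.lift_snd _ _ _
    have : Mono (j ≫ pullback.fst S.g i) := by rw [hj]; infer_instance
    have : Mono j := mono_of_mono _ (pullback.fst S.g i)
    have h1 : (ShortComplex.mk j (pullback.snd S.g i) hj').ShortExact := by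
      refine shortExact_of_lift _ _ _ fun T k hk => ?_
      have h0 : (k ≫ pullback.fst S.g i) ≫ S.g = 0 := by
        rw [Category.assoc, pullback.condition, reassoc_of% hk, zero_comp]
      refine ⟨hS.exact.lift _ h0, ?_⟩
      rw [← cancel_mono (pullback.fst S.g i), Category.assoc, hj]
      exact hS.exact.lift_f _ h0
    have hw : pullback.fst S.g i ≫ S.g ≫ p = 0 := by
      rw [pullback.condition_assoc, w, comp_zero]
    have h2 : (ShortComplex.mk (pullback.fst S.g i) (S.g ≫ p) hw).ShortExact := by
      refine shortExact_of_lift _ _ _ fun T k hk => ?_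
      have h0 : (k ≫ S.g) ≫ p = 0 := by simpa using hk
      exact ⟨pullback.lift k (hE.exact.lift _ h0) (hE.exact.lift_f _ h0).symm,
        pullback.lift_fst _ _ _⟩
    obtain ⟨m, hm, h⟩ := ih h1 h₁ hY
    exact ⟨m + 1, by omega, _, T, _, _, _, hT, h2, h⟩

/-- The least length of a composition series; by the Jordan–Hölder theorem it is the length, but
only subadditivity and monotonicity are used. The value is `0` if there is no composition series. -/
noncomputable def len (X : A) : ℕ := sInf {n | HasLen X n}

variable (hA : ∀ X : A, ∃ n, HasLen X n)
include hA

lemma len_spec (X : A) : HasLen X (len X) := Nat.sInf_mem (hA X)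

omit hA in
lemma len_le {X : A} {n : ℕ} (h : ∃ m ≤ n, HasLen X m) : len X ≤ n := by
  obtain ⟨m, hm, h⟩ := h
  exact (Nat.sInf_le h).trans hm

lemma len_le_of_mono {X Y : A} (f : X ⟶ Y) [Mono f] : len X ≤ len Y :=
  len_le ((len_spec hA Y).sub f)

lemma len_le_of_epi {X Y : A} (f : X ⟶ Y) [Epi f] : len Y ≤ len X :=
  len_le ((len_spec hA X).quot f)

lemma len_le_of_shortExact {S : ShortComplex A} (hS : S.ShortExact) :
    len S.X₂ ≤ len S.X₁ + len S.X₃ :=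
  len_le ((len_spec hA _).ext hS (len_spec hA _))

omit hA in
lemma len_of_isZero {X : A} (h : IsZero X) : len X = 0 :=
  Nat.le_zero.1 (len_le ⟨0, le_rfl, h⟩)

lemma len_eq_of_iso {X Y : A} (e : X ≅ Y) : len X = len Y :=
  le_antisymm (len_le_of_mono hA e.hom) (len_le_of_epi hA e.hom)

/-- For `X₁ ⟶ X₂ ⟶ X₃` exact in the middle, `X₂` is an extension of a subobject of `X₃` by a quotient
of `X₁`. -/
lemma len_le_of_exact {S : ShortComplex A} (hS : S.Exact) : len S.X₂ ≤ len S.X₁ + len S.X₃ := by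
  have : Epi (kernel.lift S.g S.f S.zero) := hS.epi_kernelLift
  have h := len_le_of_shortExact hA (shortExact_kernel (Abelian.factorThruImage S.g))
  have h₁ := len_le_of_mono hA (Abelian.image.ι S.g)
  have h₂ := len_le_of_epi hA (kernel.lift S.g S.f S.zero)
  have h₃ := len_le_of_mono hA (kernel.lift S.g (kernel.ι (Abelian.factorThruImage S.g)) (by
    have hk := kernel.condition (Abelian.factorThruImage S.g) =≫ Abelian.image.ι S.g
    rwa [Category.assoc, Abelian.image.fac, zero_comp] at hk))
  exact h.trans (Nat.add_le_add (h₃.trans h₂) h₁)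

end Length

section Cohomology

variable {C : Type u} [Category.{v} C] [Preadditive C] [HasZeroObject C]
  [HasShift C ℤ] [∀ n : ℤ, (shiftFunctor C n).Additive] [Pretriangulated C] [HasFiniteBiproducts C]

/-! ### Diagram chases in distinguished triangles -/

section Chase

variable {X Y Z : C} {f : X ⟶ Y} {g : Y ⟶ Z} {h : Z ⟶ X⟦(1 : ℤ)⟧}
  (hT : Triangle.mk f g h ∈ distTriang C)
include hT

lemma lift₂ {T : C} (a : T ⟶ Y) (ha : a ≫ g = 0) : ∃ b : T ⟶ X, b ≫ f = a := by
  obtain ⟨b, hb⟩ := Triangle.coyoneda_exact₂ _ hT a ha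
  exact ⟨b, hb.symm⟩

lemma lift₃ {T : C} (a : T ⟶ Z) (ha : a ≫ h = 0) : ∃ b : T ⟶ Y, b ≫ g = a := by
  obtain ⟨b, hb⟩ := Triangle.coyoneda_exact₃ _ hT a ha
  exact ⟨b, hb.symm⟩

lemma lift₁ {T : C} (a : T ⟶ X⟦(1 : ℤ)⟧) (ha : a ≫ f⟦(1 : ℤ)⟧' = 0) : ∃ b : T ⟶ Z, b ≫ h = a := by
  obtain ⟨b, hb⟩ := Triangle.coyoneda_exact₁ _ hT a ha
  exact ⟨b, hb.symm⟩

lemma lift₄ {T : C} (a : T ⟶ Y⟦(1 : ℤ)⟧) (ha : a ≫ g⟦(1 : ℤ)⟧' = 0) :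
    ∃ b : T ⟶ X⟦(1 : ℤ)⟧, b ≫ f⟦(1 : ℤ)⟧' = a := by
  obtain ⟨b, hb⟩ := lift₁ (rot_of_distTriang _ hT) a ha
  refine ⟨-b, ?_⟩
  rw [← hb]
  exact (Preadditive.neg_comp _ _).trans (Preadditive.comp_neg _ _).symm

lemma desc₂ {T : C} (a : Y ⟶ T) (ha : f ≫ a = 0) : ∃ b : Z ⟶ T, g ≫ b = a := by
  obtain ⟨b, hb⟩ := Triangle.yoneda_exact₂ _ hT a ha
  exact ⟨b, hb.symm⟩

lemma desc₃ {T : C} (a : Z ⟶ T) (ha : g ≫ a = 0) : ∃ b : X⟦(1 : ℤ)⟧ ⟶ T, h ≫ b = a := by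
  obtain ⟨b, hb⟩ := Triangle.yoneda_exact₃ _ hT a ha
  exact ⟨b, hb.symm⟩

lemma lift₀ {T : C} (a : T ⟶ X) (ha : a ≫ f = 0) :
    ∃ (b : T ⟶ Z⟦(-1 : ℤ)⟧) (k : Z⟦(-1 : ℤ)⟧ ⟶ X), b ≫ k = a := by
  obtain ⟨b, hb⟩ := Triangle.coyoneda_exact₂ _ (inv_rot_of_distTriang _ hT) a ha
  exact ⟨b, _, hb.symm⟩

lemma tr3 {X' Y' Z' : C} {f' : X' ⟶ Y'} {g' : Y' ⟶ Z'} {h' : Z' ⟶ X'⟦(1 : ℤ)⟧}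
    (hT' : Triangle.mk f' g' h' ∈ distTriang C) (a : X ⟶ X') (b : Y ⟶ Y')
    (w : f ≫ b = a ≫ f') :
    ∃ c : Z ⟶ Z', g ≫ c = b ≫ g' ∧ h ≫ a⟦(1 : ℤ)⟧' = c ≫ h' :=
  complete_distinguished_triangle_morphism _ _ hT hT' a b w

lemma tr3' {Y' Z' : C} {f' : X ⟶ Y'} {g' : Y' ⟶ Z'} {h' : Z' ⟶ X⟦(1 : ℤ)⟧}
    (hT' : Triangle.mk f' g' h' ∈ distTriang C) (c : Z ⟶ Z')
    (w : h = c ≫ h') :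
    ∃ b : Y ⟶ Y', g ≫ c = b ≫ g' := by
  obtain ⟨b, -, hb⟩ := complete_distinguished_triangle_morphism₂ _ _ hT hT' (𝟙 X) c
    ((congrArg (h ≫ ·) ((shiftFunctor C (1 : ℤ)).map_id X)).trans ((Category.comp_id h).trans w))
  exact ⟨b, hb⟩

lemma w₁₂ : f ≫ g = 0 := comp_distTriang_mor_zero₁₂ _ hT
lemma w₂₃ : g ≫ h = 0 := comp_distTriang_mor_zero₂₃ _ hT
lemma w₃₁ : h ≫ f⟦(1 : ℤ)⟧' = 0 := comp_distTriang_mor_zero₃₁ _ hT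

end Chase

/-! ### Degree zero cohomology is half exact, up to length -/

variable {t : TStructure C}

/-- The truncation triangle of `X`. -/
lemma trunc_triangle (n : ℤ) (X : C) :
    Triangle.mk (Y := X) ((t.truncLTι n).app X) ((t.truncGEπ n).app X)
      ((t.truncGEδLT n).app X) ∈ distTriang C :=
  t.triangleLTGE_distinguished n X

section Truncation

variable {X X₀ X₁ : C} {ι : X₀ ⟶ X} {π : X ⟶ X₁} {δ : X₁ ⟶ X₀⟦(1 : ℤ)⟧}
  (hT : Triangle.mk ι π δ ∈ distTriang C) (h₁ : t.IsGE X₁ 1) {T : C}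
include hT h₁

lemma trunc_lift (hT₀ : t.IsLE T 0) (a : T ⟶ X) : ∃ b : T ⟶ X₀, b ≫ ι = a :=
  lift₂ hT a (t.zero _ 0 1)

lemma trunc_inj (hT₀ : t.IsLE T 0) (a : T ⟶ X₀) (ha : a ≫ ι = 0) : a = 0 := by
  obtain ⟨b, k, hb⟩ := lift₀ hT a ha
  have : t.IsGE (X₁⟦(-1 : ℤ)⟧) 2 := t.isGE_shift X₁ 1 (-1) 2
  have hb0 : b = 0 := t.zero b 0 2
  rw [← hb, hb0, zero_comp]

lemma trunc_shift_inj (hT₀ : t.IsLE T 0) (a : T ⟶ X₀⟦(1 : ℤ)⟧) (ha : a ≫ ι⟦(1 : ℤ)⟧' = 0) :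
    a = 0 := by
  obtain ⟨b, hb⟩ := lift₁ hT a ha
  have hb0 : b = 0 := t.zero b 0 1
  rw [← hb, hb0, zero_comp]

lemma trunc_shift_lift (hT₀ : t.IsLE T (-1)) (a : T ⟶ X⟦(1 : ℤ)⟧) :
    ∃ b : T ⟶ X₀⟦(1 : ℤ)⟧, b ≫ ι⟦(1 : ℤ)⟧' = a := by
  have : t.IsGE (X₁⟦(1 : ℤ)⟧) 0 := t.isGE_shift X₁ 1 1 0
  exact lift₄ hT a (t.zero _ (-1) 0)

end Truncation

section HalfExact

variable {X Y Z : C} {f : X ⟶ Y} {g : Y ⟶ Z} {h : Z ⟶ X⟦(1 : ℤ)⟧}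
  (hT : Triangle.mk f g h ∈ distTriang C)
include hT

/-- Replace `X` and `Y` by their truncations `τ≤0`; the cone `W` of the map between them
approximates `τ≤0 Z` from the left: `Hom(T, W) ⟶ Hom(T, Z)` is injective for `T ≤ 0` and
surjective for `T ≤ -1`. -/
lemma exists_cone_trunc {X₀ X₁ Y₀ Y₁ : C}
    {ιX : X₀ ⟶ X} {πX : X ⟶ X₁} {δX : X₁ ⟶ X₀⟦(1 : ℤ)⟧}
    (hX : Triangle.mk ιX πX δX ∈ distTriang C) (hX₁ : t.IsGE X₁ 1)
    {ιY : Y₀ ⟶ Y} {πY : Y ⟶ Y₁} {δY : Y₁ ⟶ Y₀⟦(1 : ℤ)⟧}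
    (hY : Triangle.mk ιY πY δY ∈ distTriang C) (hY₁ : t.IsGE Y₁ 1)
    (f₀ : X₀ ⟶ Y₀) (hf : f₀ ≫ ιY = ιX ≫ f) :
    ∃ (W : C) (p : Y₀ ⟶ W) (d : W ⟶ X₀⟦(1 : ℤ)⟧) (γ : W ⟶ Z),
      Triangle.mk f₀ p d ∈ distTriang C ∧
      (∀ (T : C) (_ : t.IsLE T 0) (a : T ⟶ W), a ≫ γ = 0 → a = 0) ∧
      (∀ (T : C) (_ : t.IsLE T (-1)) (b : T ⟶ Z), ∃ a : T ⟶ W, a ≫ γ = b) := by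
  obtain ⟨W, p, d, hW⟩ := distinguished_cocone_triangle f₀
  obtain ⟨γ, h₁, h₂⟩ := tr3 hW hT ιX ιY hf
  refine ⟨W, p, d, γ, hW, fun T hT₀ a ha => ?_, fun T hT₀ b => ?_⟩
  · have hd : a ≫ d = 0 := trunc_shift_inj hX hX₁ hT₀ _ (by
      rw [Category.assoc, h₂, reassoc_of% ha, zero_comp])
    obtain ⟨y, rfl⟩ := lift₃ hW a hd
    obtain ⟨x, hx⟩ := lift₂ hT (y ≫ ιY) (by rw [Category.assoc, ← h₁, ← Category.assoc, ha])
    obtain ⟨x₀, rfl⟩ := trunc_lift hX hX₁ hT₀ x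
    have hy : y - x₀ ≫ f₀ = 0 := trunc_inj hY hY₁ hT₀ _ (by
      rw [Preadditive.sub_comp, Category.assoc, hf, ← hx, Category.assoc, sub_self])
    rw [sub_eq_zero.1 hy, Category.assoc, w₁₂ hW, comp_zero]
  · have hT₁ : t.IsLE T 0 := t.isLE_of_le T (-1) 0
    obtain ⟨e, he⟩ := trunc_shift_lift hX hX₁ hT₀ (b ≫ h)
    have he' : e ≫ f₀⟦(1 : ℤ)⟧' = 0 := trunc_shift_inj hY hY₁ hT₁ _ (by
      rw [Category.assoc, ← Functor.map_comp, hf, Functor.map_comp, reassoc_of% he, w₃₁ hT,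
        comp_zero])
    obtain ⟨a, rfl⟩ := lift₁ hW e he'
    obtain ⟨y, hy⟩ := lift₃ hT (b - a ≫ γ) (by
      rw [Preadditive.sub_comp, Category.assoc, ← h₂, ← he, Category.assoc, sub_self])
    obtain ⟨y₀, rfl⟩ := trunc_lift hY hY₁ hT₁ y
    refine ⟨a + y₀ ≫ p, ?_⟩
    rw [Preadditive.add_comp, Category.assoc, h₁, ← Category.assoc y₀, hy]
    abel

end HalfExact

lemma isLE_truncGE {X : C} (h : t.IsLE X 0) : t.IsLE ((t.truncGE 0).obj X) 0 :=
  isLE_third t (trunc_triangle 0 X) 0 (t.isLE_truncLT_obj X 0 1) h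

/-- The degree zero cohomology `τ≥0 X` of an object `X ≤ 0`. -/
noncomputable abbrev top (X : C) (h : t.IsLE X 0) : Ht t :=
  mkHt ((t.truncGE 0).obj X) (isLE_truncGE h) inferInstance

/-- The map induced in top cohomology. -/
noncomputable abbrev topMap {X Y : C} (f : X ⟶ Y) (hX : t.IsLE X 0) (hY : t.IsLE Y 0) :
    top X hX ⟶ top Y hY :=
  ObjectProperty.homMk ((t.truncGE 0).map f)

lemma π_naturality {X Y : C} (f : X ⟶ Y) :
    (t.truncGEπ 0).app X ≫ (t.truncGE 0).map f = f ≫ (t.truncGEπ 0).app Y :=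
  ((t.truncGEπ 0).naturality f).symm

/-- Top cohomology is right exact on distinguished triangles of objects `≤ 0`. -/
lemma topMap_exact {X Y W : C} {f : X ⟶ Y} {g : Y ⟶ W} {h : W ⟶ X⟦(1 : ℤ)⟧}
    (hT : Triangle.mk f g h ∈ distTriang C) (hX : t.IsLE X 0) (hY : t.IsLE Y 0)
    (hW : t.IsLE W 0) :
    ∃ w : topMap f hX hY ≫ topMap g hY hW = 0,
      (ShortComplex.mk (topMap f hX hY) (topMap g hY hW) w).Exact := by
  have w : topMap f hX hY ≫ topMap g hY hW = 0 := by
    ext1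
    change (t.truncGE 0).map f ≫ (t.truncGE 0).map g = 0
    rw [← Functor.map_comp, w₁₂ hT]
    exact t.from_truncGE_obj_ext (by rw [π_naturality]; simp)
  refine ⟨w, ?_⟩
  have hepi : Epi (topMap g hY hW) := by
    refine Preadditive.epi_of_cancel_zero _ fun {T} l hl => ?_
    have hl' : (t.truncGE 0).map g ≫ l.hom = 0 := congrArg (·.hom) hl
    obtain ⟨b, hb⟩ := desc₃ hT ((t.truncGEπ 0).app W ≫ l.hom) (by
      rw [← Category.assoc, ← π_naturality, Category.assoc, hl', comp_zero])
    have : t.IsLE (X⟦(1 : ℤ)⟧) (-1) := t.isLE_shift X 0 1 (-1)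
    have hb0 : b = 0 := t.zero b (-1) 0
    rw [hb0, comp_zero] at hb
    ext1
    refine t.from_truncGE_obj_ext ?_
    rw [← hb]
    exact comp_zero.symm
  refine ShortComplex.exact_of_g_is_cokernel _ ?_
  refine CokernelCofork.IsColimit.ofπ' _ w fun {T} k hk => Classical.choice ?_
  have hk' : (t.truncGE 0).map f ≫ k.hom = 0 := congrArg (·.hom) hk
  obtain ⟨l, hl⟩ := desc₂ hT ((t.truncGEπ 0).app Y ≫ k.hom) (by
    rw [← Category.assoc, ← π_naturality, Category.assoc, hk', comp_zero])
  refine ⟨⟨ObjectProperty.homMk (t.descTruncGE l 0), ?_⟩⟩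
  ext1
  refine t.from_truncGE_obj_ext ?_
  change _ ≫ (t.truncGE 0).map g ≫ t.descTruncGE l 0 = _
  rw [← Category.assoc, π_naturality, Category.assoc, t.π_descTruncGE, hl]

/-- A morphism `β : W ⟶ Z` of objects `≤ 0` which is injective on maps from objects `≤ 0` and
surjective on maps from objects `≤ -1` is a monomorphism in top cohomology. -/
lemma mono_topMap {W Z : C} (β : W ⟶ Z) (hW : t.IsLE W 0) (hZ : t.IsLE Z 0)
    (h₀ : ∀ (T : C) (_ : t.IsLE T 0) (a : T ⟶ W), a ≫ β = 0 → a = 0)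
    (h₁ : ∀ (T : C) (_ : t.IsLE T (-1)) (b : T ⟶ Z), ∃ a : T ⟶ W, a ≫ β = b) :
    Mono (topMap β hW hZ) := by
  refine Preadditive.mono_of_cancel_zero _ fun {T} g hg => ?_
  have hg' : g.hom ≫ (t.truncGE 0).map β = 0 := congrArg (·.hom) hg
  ext1
  change g.hom = 0
  have hLW : t.IsLE ((t.truncLT 0).obj W) (-1) := t.isLE_truncLT_obj _ _ _
  have hLZ : t.IsLE ((t.truncLT 0).obj Z) (-1) := t.isLE_truncLT_obj _ _ _
  -- `P` is the pullback of `W` along `g`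
  obtain ⟨P, i, q, hP⟩ := distinguished_cocone_triangle₂ (g.hom ≫ (t.truncGEδLT 0).app W)
  obtain ⟨φ, hφ⟩ := tr3' hP (trunc_triangle 0 W) g.hom rfl
  have hP₀ : t.IsLE P 0 := t.isLE₂ _ hP 0 (t.isLE_of_le ((t.truncLT 0).obj W) (-1) 0)
    (inferInstanceAs (t.IsLE T.obj 0))
  obtain ⟨b, hb⟩ := lift₂ (trunc_triangle (t := t) 0 Z) (φ ≫ β) (by
    rw [Category.assoc, ← π_naturality, ← Category.assoc, ← hφ, Category.assoc, hg', comp_zero])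
  obtain ⟨a, ha⟩ := h₁ _ hLZ ((t.truncLTι 0).app Z)
  have hz : φ - b ≫ a = 0 := h₀ P hP₀ _ (by
    rw [Preadditive.sub_comp, Category.assoc, ha, hb, sub_self])
  have ha' : a ≫ (t.truncGEπ 0).app W = 0 := t.zero _ (-1) 0
  rw [sub_eq_zero.1 hz, Category.assoc, ha', comp_zero] at hφ
  obtain ⟨m, hm⟩ := desc₃ hP g.hom hφ
  have : t.IsLE (((t.truncLT 0).obj W)⟦(1 : ℤ)⟧) (-2) := t.isLE_shift _ (-1) 1 (-2)
  have : t.IsGE ((t.truncGE 0).obj W) 0 := inferInstance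
  have hm0 : m = 0 := t.zero m (-2) 0
  rw [← hm, hm0, comp_zero]

instance isLE_truncLT_one (X : C) : t.IsLE ((t.truncLT 1).obj X) 0 := t.isLE_truncLT_obj _ _ _

/-- The degree zero cohomology of `X` for the t-structure `t`. -/
noncomputable abbrev H0 (t : TStructure C) (X : C) : Ht t :=
  top (t := t) ((t.truncLT 1).obj X) inferInstance

/-- Subadditivity of the length of `H⁰` on a distinguished triangle. With `W` the cone of
`τ≤0 X ⟶ τ≤0 Y`, the sequence `H⁰(X) ⟶ H⁰(Y) ⟶ H⁰(W)` is exact and `H⁰(W) ⟶ H⁰(Z)` is a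
monomorphism. -/
lemma len_H0_le (hA : ∀ X : Ht t, ∃ n, HasLen X n)
    {X Y Z : C} {f : X ⟶ Y} {g : Y ⟶ Z} {h : Z ⟶ X⟦(1 : ℤ)⟧}
    (hT : Triangle.mk f g h ∈ distTriang C) :
    len (H0 t Y) ≤ len (H0 t X) + len (H0 t Z) := by
  have hZ := trunc_triangle (t := t) 1 Z
  obtain ⟨W, p, d, γ, hW, h₀, h₁⟩ := exists_cone_trunc (t := t) hT (trunc_triangle 1 X) inferInstance
    (trunc_triangle 1 Y) inferInstance ((t.truncLT 1).map f) ((t.truncLTι 1).naturality f)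
  have hW₀ : t.IsLE W 0 := isLE_third t hW 0 (t.isLE_of_le ((t.truncLT 1).obj X) 0 1)
    (inferInstanceAs (t.IsLE ((t.truncLT 1).obj Y) 0))
  obtain ⟨β, hβ⟩ := trunc_lift hZ inferInstance hW₀ γ
  have hm := mono_topMap (t := t) β hW₀ inferInstance
    (fun T hT a ha => h₀ T hT a (by rw [← hβ, reassoc_of% ha, zero_comp]))
    (fun T hT b => by
      obtain ⟨a, ha⟩ := h₁ T hT (b ≫ (t.truncLTι 1).app Z)
      refine ⟨a, sub_eq_zero.1 (trunc_inj hZ inferInstance (t.isLE_of_le T (-1) 0) _ ?_)⟩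
      rw [Preadditive.sub_comp, Category.assoc, hβ, ha, sub_self])
  obtain ⟨w, hex⟩ := topMap_exact (t := t) hW inferInstance inferInstance hW₀
  exact (len_le_of_exact hA hex).trans (Nat.add_le_add_left
    (len_le_of_mono hA (topMap β hW₀ inferInstance)) _)

end Cohomology

/-! ### Filtrations by triangles and composition series in the heart -/

section Filtrations

variable {C : Type u} [Category.{v} C] [Preadditive C] [HasZeroObject C]
  [HasShift C ℤ] [∀ n : ℤ, (shiftFunctor C n).Additive] [Pretriangulated C] [HasFiniteBiproducts C]

/-- There is a distinguished triangle `X ⟶ Y ⟶ Z ⟶ X⟦1⟧`. -/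
def Tri (X Y Z : C) : Prop :=
  ∃ (f : X ⟶ Y) (g : Y ⟶ Z) (h : Z ⟶ X⟦(1 : ℤ)⟧), Triangle.mk f g h ∈ distTriang C

lemma Tri.of_iso {X Y Z X' Y' Z' : C} (hT : Tri X Y Z) (e₁ : X ≅ X') (e₂ : Y ≅ Y')
    (e₃ : Z ≅ Z') : Tri X' Y' Z' := by
  obtain ⟨f, g, h, hT⟩ := hT
  refine ⟨e₁.inv ≫ f ≫ e₂.hom, e₂.inv ≫ g ≫ e₃.hom, e₃.inv ≫ h ≫ e₁.hom⟦(1 : ℤ)⟧',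
    mem_of_iso hT e₁.symm e₂.symm e₃.symm ?_ ?_ ?_⟩
  · simp
  · simp
  · simp [← CategoryTheory.Functor.map_comp]

lemma Tri.shift {X Y Z : C} (hT : Tri X Y Z) (n : ℤ) : Tri (X⟦n⟧) (Y⟦n⟧) (Z⟦n⟧) := by
  obtain ⟨f, g, h, hT⟩ := hT
  exact ⟨_, _, _, Triangle.shift_distinguished _ hT n⟩

lemma tri_id (X : C) : Tri X X 0 := ⟨_, _, _, contractible_distinguished X⟩

lemma tri_zero (X : C) : Tri 0 X X := ⟨_, _, _, contractible_distinguished₁ X⟩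

lemma filtration_zero {F : C} {X : Fin 0 → C} :
    HasFiltrationIn C Set.univ F X ↔ IsZero F := by
  constructor
  · rintro ⟨A, hA, ⟨e⟩, -, -⟩
    exact hA.of_iso e.symm
  · exact fun h => ⟨fun _ => F, h, ⟨Iso.refl _⟩, fun _ => trivial, fun i => i.elim0⟩

/-- A filtration with `m + 1` factors is a filtration with `m` factors of an object `A`, and a
triangle `A ⟶ F ⟶ X m`. -/
lemma filtration_succ {m : ℕ} {F : C} {X : Fin (m + 1) → C} :
    HasFiltrationIn C Set.univ F X ↔
      ∃ A : C, HasFiltrationIn C Set.univ A (fun i => X i.castSucc) ∧ Tri A F (X (Fin.last m)) := by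
  constructor
  · rintro ⟨A, hA, ⟨e⟩, -, hT⟩
    exact ⟨A (Fin.last m).castSucc, ⟨fun i => A i.castSucc, hA, ⟨Iso.refl _⟩, fun _ => trivial,
      fun i => hT i.castSucc⟩, Tri.of_iso (hT (Fin.last m)) (Iso.refl _) e (Iso.refl _)⟩
  · rintro ⟨B, ⟨A, hA, ⟨e⟩, -, hT⟩, hB⟩
    have key : ∀ i : Fin (m + 1), Tri (Fin.snoc (α := fun _ => C) A F i.castSucc)
        (Fin.snoc (α := fun _ => C) A F i.succ) (X i) := by
      intro i
      induction i using Fin.lastCases with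
      | last =>
        rw [Fin.succ_last, Fin.snoc_last, Fin.snoc_castSucc]
        exact hB.of_iso e.symm (Iso.refl _) (Iso.refl _)
      | cast i =>
        rw [Fin.succ_castSucc, Fin.snoc_castSucc, Fin.snoc_castSucc]
        exact hT i
    refine ⟨Fin.snoc (α := fun _ => C) A F, ?_, ?_, fun _ => trivial, key⟩
    · rw [← Fin.castSucc_zero, Fin.snoc_castSucc]
      exact hA
    · rw [Fin.snoc_last]
      exact ⟨Iso.refl _⟩

section Bridge

variable {t : TStructure C}

/-- Distinguished triangles with vertices in the heart are short exact sequences. -/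
lemma shortExact_of_tri {X Y Z : Ht t} (hT : Tri X.obj Y.obj Z.obj) :
    ∃ (f : X ⟶ Y) (g : Y ⟶ Z) (w : f ≫ g = 0), (ShortComplex.mk f g w).ShortExact := by
  obtain ⟨f, g, h, hT⟩ := hT
  have w : (ObjectProperty.homMk f : X ⟶ Y) ≫ (ObjectProperty.homMk g : Y ⟶ Z) = 0 := by
    ext1
    exact w₁₂ hT
  have h₁ : IsLimit (KernelFork.ofι _ w) :=
    isLimitKernelForkOfDistTriang (ι := t.heart.ι) hom_neg _ _ h hT
  have h₂ : IsColimit (CokernelCofork.ofπ _ w) :=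
    isColimitCokernelCoforkOfDistTriang (ι := t.heart.ι) hom_neg _ _ h hT
  exact ⟨_, _, w,
    { exact := ShortComplex.exact_of_f_is_kernel (ShortComplex.mk _ _ w) h₁
      mono_f := mono_of_isLimit_fork h₁
      epi_g := epi_of_isColimit_cofork h₂ }⟩

/-- Conversely, short exact sequences in the heart come from distinguished triangles. -/
lemma tri_of_shortExact {X Y Z : Ht t} {f : X ⟶ Y} {g : Y ⟶ Z} {w : f ≫ g = 0}
    (h : (ShortComplex.mk f g w).ShortExact) : Tri X.obj Y.obj Z.obj := by
  have : Epi g := h.epi_g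
  obtain ⟨K, i, δ, hT⟩ := exists_triangle_of_epi g
  have h₁ := isLimitKernelForkOfDistTriang (ι := t.heart.ι) hom_neg i g δ hT
  have e : K ≅ X := IsLimit.conePointUniqueUpToIso h₁ h.fIsKernel
  exact Tri.of_iso ⟨_, _, _, hT⟩ (t.heart.ι.mapIso e) (Iso.refl _) (Iso.refl _)

lemma isZero_obj_iff (X : Ht t) : IsZero X.obj ↔ IsZero X := by
  refine ⟨fun h => (IsZero.iff_id_eq_zero _).2 ?_, fun h => t.heart.ι.map_isZero h⟩
  ext1
  exact h.eq_of_src _ _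

variable {H : Set C} (hH : ∀ X, X ∈ H ↔ t.heart X)
include hH

lemma simpleIn_iff (X : Ht t) : SimpleIn C H X.obj ↔ Simple X := by
  constructor
  · rintro ⟨-, hX, h⟩
    rw [isZero_obj_iff] at hX
    refine ⟨fun {Y} f _ => ⟨fun _ h0 => hX ?_, fun h0 => ?_⟩⟩
    · have : Epi (0 : Y ⟶ X) := by rw [← h0]; infer_instance
      exact IsZero.of_epi_zero Y X
    · obtain ⟨Q, p, δ, hT⟩ := exists_triangle_of_mono f
      rcases h _ _ ((hH _).2 Y.2) ((hH _).2 Q.2) ⟨_, _, _, hT⟩ with h' | h'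
      · exact absurd (((isZero_obj_iff Y).1 h').eq_of_src _ _) h0
      · have : IsIso (t.heart.ι.map f) := (Triangle.isZero₃_iff_isIso₁ _ hT).1 h'
        exact isIso_of_reflects_iso f t.heart.ι
  · intro hX
    refine ⟨(hH _).2 X.2, fun h => Simple.not_isZero X ((isZero_obj_iff X).1 h), ?_⟩
    intro A B hA hB hT
    obtain ⟨f, g, w, hE⟩ := shortExact_of_tri (X := ⟨A, (hH _).1 hA⟩) (Y := X)
      (Z := ⟨B, (hH _).1 hB⟩) hT
    have : Mono f := hE.mono_f
    have : Epi g := hE.epi_g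
    by_cases h0 : f = 0
    · left
      refine (isZero_obj_iff (⟨A, (hH _).1 hA⟩ : Ht t)).2 ?_
      have : Mono (0 : (⟨A, (hH _).1 hA⟩ : Ht t) ⟶ X) := by rw [← h0]; infer_instance
      exact IsZero.of_mono_zero _ X
    · right
      have := isIso_of_mono_of_nonzero h0
      have h1 : g = 0 := by rw [← cancel_epi f, w, comp_zero]
      refine (isZero_obj_iff (⟨B, (hH _).1 hB⟩ : Ht t)).2 ?_
      have : Epi (0 : X ⟶ (⟨B, (hH _).1 hB⟩ : Ht t)) := by rw [← h1]; infer_instance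
      exact IsZero.of_epi_zero X _

/-- Composition series in the triangulated sense are composition series in the abelian heart; this
lemma and `hasLengthIn_of_hasLen` make the two notions of length equivalent. -/
lemma hasLen_of_hasLengthIn {n : ℕ} : ∀ {X : C} (_ : HasLengthIn C H X n),
    ∃ h : t.heart X, HasLen (⟨X, h⟩ : Ht t) n := by
  induction n with
  | zero =>
    rintro X ⟨S, -, hF⟩
    have hz := filtration_zero.1 hF
    have h : t.heart X := t.heart.prop_of_iso hz.isoZero.symm
      ⟨(inferInstance : t.IsLE (0 : C) 0).le, (inferInstance : t.IsGE (0 : C) 0).ge⟩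
    exact ⟨h, (isZero_obj_iff (⟨X, h⟩ : Ht t)).1 hz⟩
  | succ n ih =>
    rintro X ⟨S, hS, hF⟩
    obtain ⟨A, hA, hT⟩ := filtration_succ.1 hF
    obtain ⟨hA', hlen⟩ := ih ⟨_, fun i => hS i.castSucc, hA⟩
    have hS' : t.heart (S (Fin.last n)) := (hH _).1 (hS (Fin.last n)).1
    have h : t.heart X := by
      obtain ⟨f, g, h, hT⟩ := hT
      exact ⟨(t.isLE₂ _ hT 0 ⟨hA'.1⟩ ⟨hS'.1⟩).le, (t.isGE₂ _ hT 0 ⟨hA'.2⟩ ⟨hS'.2⟩).ge⟩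
    obtain ⟨f, g, w, hE⟩ := shortExact_of_tri (X := ⟨A, hA'⟩) (Y := ⟨X, h⟩)
      (Z := ⟨S (Fin.last n), hS'⟩) hT
    exact ⟨h, _, _, f, g, w, (simpleIn_iff hH _).1 (hS (Fin.last n)), hE, hlen⟩

lemma hasLengthIn_of_hasLen {n : ℕ} : ∀ {X : Ht t} (_ : HasLen X n), HasLengthIn C H X.obj n := by
  induction n with
  | zero =>
    exact fun {X} h => ⟨Fin.elim0, fun i => i.elim0, filtration_zero.2 ((isZero_obj_iff X).2 h)⟩
  | succ n ih =>
    rintro X ⟨B, S, i, p, w, hS, hE, hB⟩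
    obtain ⟨S', hS', hF⟩ := ih hB
    refine ⟨Fin.snoc (α := fun _ => C) S' S.obj, fun i => ?_, filtration_succ.2 ⟨B.obj, ?_, ?_⟩⟩
    · induction i using Fin.lastCases with
      | last => rw [Fin.snoc_last]; exact (simpleIn_iff hH S).2 hS
      | cast i => rw [Fin.snoc_castSucc]; exact hS' i
    · simp only [Fin.snoc_castSucc]
      exact hF
    · rw [Fin.snoc_last]
      exact tri_of_shortExact hE

end Bridge

end Filtrations

/-! ### The weighted length of the cohomology -/

section Weighted

variable {C : Type u} [Category.{v} C] [Preadditive C] [HasZeroObject C]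
  [HasShift C ℤ] [∀ n : ℤ, (shiftFunctor C n).Additive] [Pretriangulated C] [HasFiniteBiproducts C]
  {t : TStructure C}

lemma len_eq_of_obj_iso (hA : ∀ X : Ht t, ∃ n, HasLen X n) {X Y : Ht t}
    (e : Nonempty (X.obj ≅ Y.obj)) : len X = len Y :=
  len_eq_of_iso hA (t.heart.ι.preimageIso e.some)

/-- Uniqueness of truncation triangles. -/
lemma trunc_unique {A E B A' E' B' : C} (hT : Tri A E B) (hT' : Tri A' E' B') (e : E ≅ E')
    (n : ℤ) (hA : t.IsLE A n) (hB : t.IsGE B (n + 1)) (hA' : t.IsLE A' n)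
    (hB' : t.IsGE B' (n + 1)) : Nonempty (A ≅ A') ∧ Nonempty (B ≅ B') := by
  obtain ⟨f, g, h, hT⟩ := hT
  obtain ⟨f', g', h', hT'⟩ := hT'
  obtain ⟨e', -⟩ := t.triangle_iso_exists hT hT' e n (n + 1) hA hB hA' hB'
  exact ⟨⟨Triangle.π₁.mapIso e'⟩, ⟨Triangle.π₃.mapIso e'⟩⟩

/-- `H⁰` can be computed from any pair of truncation triangles. -/
lemma H0_iso {E L G L' P : C} (h₁ : Tri L E G) (hL : t.IsLE L 0) (hG : t.IsGE G 1)
    (h₂ : Tri L' L P) (hL' : t.IsLE L' (-1)) (hP : t.IsGE P 0) :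
    Nonempty ((H0 t E).obj ≅ P) := by
  obtain ⟨⟨e⟩, -⟩ := trunc_unique (t := t) ⟨_, _, _, trunc_triangle (t := t) 1 E⟩ h₁ (Iso.refl E) 0
    inferInstance (inferInstanceAs (t.IsGE ((t.truncGE 1).obj E) 1)) hL hG
  exact (trunc_unique (t := t) ⟨_, _, _, trunc_triangle (t := t) 0 ((t.truncLT 1).obj E)⟩ h₂ e (-1)
    (t.isLE_truncLT_obj _ _ _) (inferInstanceAs (t.IsGE ((t.truncGE 0).obj _) 0)) hL' hP).2

lemma H0_congr {E E' : C} (e : E ≅ E') : Nonempty ((H0 t E).obj ≅ (H0 t E').obj) :=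
  ⟨(t.truncGE 0).mapIso ((t.truncLT 1).mapIso e)⟩

lemma H0_heart (X : Ht t) : Nonempty ((H0 t X.obj).obj ≅ X.obj) :=
  H0_iso (tri_id X.obj) inferInstance inferInstance (tri_zero X.obj) inferInstance inferInstance

lemma len_H0_of_isLE (E : C) (h : t.IsLE E (-1)) : len (H0 t E) = 0 := by
  obtain ⟨e⟩ := H0_iso (t := t) (tri_id E) (t.isLE_of_le E (-1) 0) inferInstance (tri_id E) h
    inferInstance
  exact len_of_isZero ((isZero_obj_iff _).1 ((isZero_zero C).of_iso e))

lemma len_H0_of_isGE (E : C) (h : t.IsGE E 1) : len (H0 t E) = 0 := by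
  obtain ⟨e⟩ := H0_iso (t := t) (tri_zero E) inferInstance h (tri_id 0) inferInstance
    inferInstance
  exact len_of_isZero ((isZero_obj_iff _).1 ((isZero_zero C).of_iso e))

/-- The weighted total length of the cohomology of `E`, where `Hⁿ(E) = H⁰(E⟦n⟧)`. -/
noncomputable def cx (t : TStructure C) (s : ℝ) (E : C) : ℝ≥0∞ :=
  ∑' n : ℤ, (len (H0 t (E⟦n⟧)) : ℝ≥0∞) * ENNReal.ofReal (Real.exp (((-n : ℤ) : ℝ) * s))

/-- `cx` is subadditive on distinguished triangles, degree by degree. -/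
lemma cx_tri (hA : ∀ X : Ht t, ∃ n, HasLen X n) (s : ℝ) {X Y Z : C} (hT : Tri X Y Z) :
    cx t s Y ≤ cx t s X + cx t s Z := by
  unfold cx
  rw [← ENNReal.tsum_add]
  refine ENNReal.tsum_le_tsum fun n => ?_
  rw [← add_mul]
  gcongr
  obtain ⟨f, g, h, hT⟩ := hT.shift n
  exact_mod_cast len_H0_le hA hT

lemma cx_zero (s : ℝ) {E : C} (hE : IsZero E) : cx t s E = 0 := by
  refine ENNReal.tsum_eq_zero.2 fun n => ?_
  rw [len_H0_of_isLE _ (t.isLE_of_isZero ((shiftFunctor C n).map_isZero hE) _)]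
  simp

/-- For a shifted object of the heart, only the term `n = -k` of the sum survives. -/
lemma cx_heart (hA : ∀ X : Ht t, ∃ n, HasLen X n) (s : ℝ) (X : Ht t) (k : ℤ) :
    cx t s (X.obj⟦k⟧) = (len X : ℝ≥0∞) * ENNReal.ofReal (Real.exp ((k : ℝ) * s)) := by
  unfold cx
  rw [tsum_eq_single (-k)]
  · obtain ⟨e⟩ := exists_iso_shift X.obj k
    obtain ⟨e₁⟩ := H0_congr (t := t) e
    obtain ⟨e₂⟩ := H0_heart X
    rw [len_eq_of_obj_iso hA ⟨e₁ ≪≫ e₂⟩, neg_neg]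
  · intro n hn
    have h₁ : t.IsLE (X.obj⟦k⟧) (-k) := t.isLE_shift X.obj 0 k (-k)
    have h₂ : t.IsGE (X.obj⟦k⟧) (-k) := t.isGE_shift X.obj 0 k (-k)
    have h₃ : t.IsLE ((X.obj⟦k⟧)⟦n⟧) (-k - n) := t.isLE_shift _ (-k) n (-k - n)
    have h₄ : t.IsGE ((X.obj⟦k⟧)⟦n⟧) (-k - n) := t.isGE_shift _ (-k) n (-k - n)
    have : len (H0 t ((X.obj⟦k⟧)⟦n⟧)) = 0 := by
      rcases lt_or_gt_of_ne hn with h | h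
      · exact len_H0_of_isGE _ (t.isGE_of_ge _ 1 (-k - n))
      · exact len_H0_of_isLE _ (t.isLE_of_le _ (-k - n) (-1))
    rw [this]
    simp

/-- `cx` is bounded by its sum over the factors of any filtration. -/
lemma cx_filtration (hA : ∀ X : Ht t, ∃ n, HasLen X n) (s : ℝ) {m : ℕ} : ∀ {E : C} {X : Fin m → C}
    (_ : HasFiltrationIn C Set.univ E X), cx t s E ≤ ∑ i, cx t s (X i) := by
  induction m with
  | zero => exact fun h => by simp [cx_zero s (filtration_zero.1 h)]
  | succ m ih =>
    intro E X h
    obtain ⟨A, hF, hT⟩ := filtration_succ.1 h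
    rw [Fin.sum_univ_castSucc]
    exact (cx_tri hA s hT).trans (add_le_add_left (ih hF) _)

/-- The cone of `τ<n E ⟶ τ≤n E` is `≥ n`. This is checked by orthogonality to objects `≤ n - 1`,
which avoids the octahedral axiom. -/
lemma exists_tri_truncLT (n : ℤ) (E : C) :
    ∃ Q : C, t.IsGE Q n ∧ Tri ((t.truncLT n).obj E) ((t.truncLT (n + 1)).obj E) Q := by
  obtain ⟨Q, p, d, hQ⟩ :=
    distinguished_cocone_triangle ((t.natTransTruncLTOfLE n (n + 1) (by lia)).app E)
  have hφ := t.natTransTruncLTOfLE_ι_app n (n + 1) (by lia) E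
  refine ⟨Q, ?_, _, _, _, hQ⟩
  rw [t.isGE_iff_orthogonal (n - 1) n (by lia)]
  intro T a hT
  have hG : t.IsGE ((t.truncGE n).obj E) n := inferInstance
  have hn : t.IsLE T (n + 1 - 1) := t.isLE_of_le T (n - 1) _
  -- `a ≫ d` dies in `E⟦1⟧`, hence lifts to a map `T ⟶ τ≥n E`, which is zero by orthogonality
  have hd : a ≫ d = 0 := by
    obtain ⟨b, hb⟩ := lift₁ (trunc_triangle (t := t) n E) (a ≫ d) (by
      rw [Category.assoc, ← hφ, CategoryTheory.Functor.map_comp, reassoc_of% (w₃₁ hQ), zero_comp,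
        comp_zero])
    rw [← hb, t.zero b (n - 1) n, zero_comp]
  obtain ⟨y, rfl⟩ := lift₃ hQ a hd
  obtain ⟨x, hx⟩ := lift₂ (trunc_triangle (t := t) n E) (y ≫ (t.truncLTι (n + 1)).app E)
    (t.zero _ (n - 1) n)
  have hy : y = x ≫ (t.natTransTruncLTOfLE n (n + 1) (by lia)).app E :=
    t.to_truncLT_obj_ext (by rw [Category.assoc, hφ, hx])
  rw [hy, Category.assoc, w₁₂ hQ, comp_zero]

/-- The triangle `τ<n E ⟶ τ≤n E ⟶ Hⁿ(E)⟦-n⟧`. -/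
lemma tri_truncLT (n : ℤ) (E : C) :
    Tri ((t.truncLT n).obj E) ((t.truncLT (n + 1)).obj E) ((H0 t (E⟦n⟧)).obj⟦-n⟧) := by
  obtain ⟨Q, h₃, hT'⟩ := exists_tri_truncLT (t := t) n E
  have h₀ : t.IsLE ((t.truncLT n).obj E) (n - 1) := t.isLE_truncLT_obj _ _ _
  have h₁ : t.IsLE ((t.truncLT (n + 1)).obj E) n := t.isLE_truncLT_obj _ _ _
  have h₂ : t.IsGE ((t.truncGE (n + 1)).obj E) (n + 1) := inferInstance
  obtain ⟨e⟩ := H0_iso (t := t) (Tri.shift ⟨_, _, _, trunc_triangle (n + 1) E⟩ n)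
    (t.isLE_shift _ n n 0) (t.isGE_shift _ (n + 1) n 1) (hT'.shift n)
    (t.isLE_shift _ (n - 1) n (-1)) (t.isGE_shift _ n n 0)
  obtain ⟨e'⟩ := exists_iso_shift Q n
  exact hT'.of_iso (Iso.refl _) (Iso.refl _) (((shiftFunctor C (-n)).mapIso e ≪≫ e').symm)

/-- An object in degrees `[a, b]` is filtered by its truncations, with factors the shifted cohomology
objects. -/
lemma filtration_trunc (E : C) (a b : ℤ) (ha : t.IsGE E a) (hb : t.IsLE E b) :
    ∃ m : ℕ, HasFiltrationIn C Set.univ E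
      (fun i : Fin m => (H0 t (E⟦a + (i : ℤ)⟧)).obj⟦-(a + (i : ℤ))⟧) := by
  refine ⟨(b + 1 - a).toNat, fun i => (t.truncLT (a + (i : ℤ))).obj E, ?_, ?_,
    fun _ => trivial, fun i => ?_⟩
  · simpa using t.isZero_truncLT_obj_of_isGE a E
  · have hb' : t.IsLE E (a + ((b + 1 - a).toNat : ℤ) - 1) := t.isLE_of_le E b _
    have := (t.isLE_iff_isIso_truncLTι_app _ (a + ((b + 1 - a).toNat : ℤ)) (by lia) E).1 hb'
    exact ⟨asIso ((t.truncLTι (a + ((b + 1 - a).toNat : ℤ))).app E)⟩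
  · have := tri_truncLT (t := t) (a + (i : ℤ)) E
    rw [add_assoc] at this
    exact_mod_cast this

lemma ofReal_sum_eq {m : ℕ} (lam : Fin m → ℕ) (k : Fin m → ℤ) (s : ℝ) :
    ENNReal.ofReal (∑ i, (lam i : ℝ) * Real.exp ((k i : ℝ) * s)) =
      ∑ i, (lam i : ℝ≥0∞) * ENNReal.ofReal (Real.exp ((k i : ℝ) * s)) := by
  rw [ENNReal.ofReal_sum_of_nonneg fun i _ => by positivity]
  refine Finset.sum_congr rfl fun i _ => ?_
  rw [ENNReal.ofReal_mul (Nat.cast_nonneg _), ENNReal.ofReal_natCast]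

variable {H : Set C} (hH : ∀ X, X ∈ H ↔ t.heart X) (hA : ∀ X : Ht t, ∃ n, HasLen X n)
include hH hA

/-- Every t-filtration of `E` bounds `cx t s E` from above, by subadditivity of `cx`. -/
lemma cx_le_tComplexity (s : ℝ) (E : C) : cx t s E ≤ tComplexity C H s E := by
  refine le_sInf ?_
  rintro c ⟨m, k, X, lam, -, hX, hlam, hF, rfl⟩
  refine (cx_filtration hA s hF).trans ?_
  rw [ofReal_sum_eq]
  refine Finset.sum_le_sum fun i _ => ?_
  obtain ⟨h, hl⟩ := hasLen_of_hasLengthIn hH (hlam i)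
  rw [cx_heart hA s ⟨X i, h⟩ (k i)]
  gcongr
  exact len_le ⟨_, le_rfl, hl⟩

/-- The truncation filtration of a bounded object realizes `cx t s E`. -/
lemma tComplexity_le_cx (s : ℝ) (E : C) (a b : ℤ) (ha : t.IsGE E a) (hb : t.IsLE E b) :
    tComplexity C H s E ≤ cx t s E := by
  obtain ⟨m, hF⟩ := filtration_trunc E a b ha hb
  refine le_trans (sInf_le ⟨m, fun i => -(a + (i : ℤ)), fun i => (H0 t (E⟦a + (i : ℤ)⟧)).obj,
    fun i => len (H0 t (E⟦a + (i : ℤ)⟧)), fun i j hij => ?_, fun i => (hH _).2 (H0 t _).2,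
    fun i => hasLengthIn_of_hasLen hH (len_spec hA _), hF, rfl⟩) ?_
  · have : (i : ℕ) < j := hij
    simp only
    lia
  · rw [ofReal_sum_eq, ← tsum_fintype (L := SummationFilter.unconditional _)]
    refine ENNReal.tsum_comp_le_tsum_of_injective (f := fun i : Fin m => a + (i : ℤ))
      (fun i j hij => ?_) (fun n : ℤ => (len (H0 t (E⟦n⟧)) : ℝ≥0∞) *
        ENNReal.ofReal (Real.exp (((-n : ℤ) : ℝ) * s)))
    simpa [Fin.ext_iff] using hij

end Weighted

/-! ### Comparison with Mathlib's t-structures -/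

section Comparison

variable {C : Type u} [Category.{v} C] [Preadditive C] [HasZeroObject C]
  [HasShift C ℤ] [∀ n : ℤ, (shiftFunctor C n).Additive] [Pretriangulated C] [HasFiniteBiproducts C]
  {le ge : Set C} (ht : IsTStructureIn C Set.univ le ge)

/-- The t-structure of Mathlib determined by `le = D^{≤0}` and `ge = D^{≥0}`: an object is `≤ n`
(resp. `≥ n`) if its shift by `n` lies in `le` (resp. `ge`). -/
def tstr : TStructure C where
  le n X := X⟦n⟧ ∈ le
  ge n X := X⟦n⟧ ∈ ge
  le_isClosedUnderIsomorphisms n := ⟨fun e hX => ht.le_iso ((shiftFunctor C n).mapIso e) hX⟩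
  ge_isClosedUnderIsomorphisms n := ⟨fun e hX => ht.ge_iso ((shiftFunctor C n).mapIso e) hX⟩
  le_shift n a n' h X hX := ht.le_iso ((shiftFunctorAdd' C a n' n h).app X) hX
  ge_shift n a n' h X hX := ht.ge_iso ((shiftFunctorAdd' C a n' n h).app X) hX
  zero' X Y f hX hY := ht.hom_zero X (ht.le_iso ((shiftFunctorZero C ℤ).app X) hX) Y hY f
  le_zero_le X hX := ht.shift_le X (ht.le_iso ((shiftFunctorZero C ℤ).app X) hX)
  ge_one_le X hX := ht.ge_iso
    ((shiftFunctorAdd' C (1 : ℤ) (-1) 0 (by lia)).app X).symm (ht.shift_ge _ hX)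
  exists_triangle_zero_one A := by
    obtain ⟨X, Y, hX, hY, f, g, h, hT⟩ := ht.exists_triangle A trivial
    exact ⟨X, Y, ht.le_iso ((shiftFunctorZero C ℤ).app X).symm hX, hY, f, g, h, hT⟩

lemma mem_heart_iff (X : C) : X ∈ CatEnt.heart C le ge ↔ (tstr ht).heart X := by
  have e := (shiftFunctorZero C ℤ).app X
  exact ⟨fun h => ⟨ht.le_iso e.symm h.1, ht.ge_iso e.symm h.2⟩,
    fun h => ⟨ht.le_iso e h.1, ht.ge_iso e h.2⟩⟩

end Comparison

end HeartAux

/-- for a bounded t-structure `𝔞 = (le, ge)` with finite heart on a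
`K`-linear idempotent complete triangulated category `D`, the invariant `δ̂_t^𝔞`
is subadditive on exact triangles: if `D' → E → F → ΣD'` is an exact triangle then
`δ̂_t^𝔞(E) ≤ δ̂_t^𝔞(D') + δ̂_t^𝔞(F)`. -/
theorem tComplexity_subadditive
    (K : Type w) [Field K]
    (D : Type u) [Category.{v} D] [Preadditive D] [CategoryTheory.Linear K D]
    [HasZeroObject D] [HasShift D ℤ] [∀ n : ℤ, (shiftFunctor D n).Additive]
    [Pretriangulated D] [HasFiniteBiproducts D] [IsIdempotentComplete D]
    (le ge : Set D)
    (ht : IsTStructureIn D Set.univ le ge)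
    (hbd : IsBoundedIn D Set.univ le ge)
    (hfin : FiniteHeart D (heart D le ge))
    (D' E F : D)
    (u : D' ⟶ E) (v : E ⟶ F) (w : F ⟶ D'⟦(1 : ℤ)⟧)
    (hT : Triangle.mk u v w ∈ distTriang D) (t : ℝ) :
    tComplexity D (heart D le ge) t E ≤
      tComplexity D (heart D le ge) t D' + tComplexity D (heart D le ge) t F := by
  have hH := HeartAux.mem_heart_iff ht
  have hA : ∀ X : HeartAux.Ht (HeartAux.tstr ht), ∃ n, HeartAux.HasLen X n := fun X => by
    obtain ⟨n, hn⟩ := hfin.1 X.obj ((hH _).2 X.2)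
    obtain ⟨h, hl⟩ := HeartAux.hasLen_of_hasLengthIn hH hn
    exact ⟨n, hl⟩
  obtain ⟨⟨b, hb⟩, ⟨a, ha⟩⟩ := hbd E trivial
  calc tComplexity D (heart D le ge) t E
      ≤ HeartAux.cx (HeartAux.tstr ht) t E :=
        HeartAux.tComplexity_le_cx hH hA t E a b ⟨ha⟩ ⟨hb⟩
    _ ≤ HeartAux.cx (HeartAux.tstr ht) t D' + HeartAux.cx (HeartAux.tstr ht) t F :=
        HeartAux.cx_tri hA t ⟨u, v, w, hT⟩
    _ ≤ _ := add_le_add (HeartAux.cx_le_tComplexity hH hA t D')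
        (HeartAux.cx_le_tComplexity hH hA t F)
end

section
/- Let K be a field, D a K-linear idempotent complete triangulated category, and 𝔞 a bounded t-structure on D with finite heart H. Let S_1,…,S_n ∈ H be a complete set of pairwise non-isomorphic simple objects and S := S_1 ⊕ ⋯ ⊕ S_n. Then for any E ∈ D and every t ∈ ℝ, δ̂_t^𝔞(E) ≥ δ_t(S, E). -/
/-!
The idea is to turn any t-filtration of `E`, with factors `X i⟦k i⟧`, into a filtration whose
factors are shifts of simple objects, and then to pad every simple factor to a shift of `⨁ S` by
adding a split triangle.

Padding (`HasCost.extend`): if `S i ⊞ Z ≅ ⨁ S` and `A → F → S i⟦k⟧` is distinguished, then the sum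
with the split triangle `A' → A' ⊞ Z⟦k⟧ → Z⟦k⟧` exhibits `F ⊞ (A' ⊞ Z⟦k⟧)` as an extension of
`A ⊞ A'` by `(⨁ S)⟦k⟧`. So each simple factor in shift `k` contributes exactly `exp (k * t)`.

Refinement (`exists_refinement`): given `A → A' → X` and `B → X → T`, one wants `A''` with
`A → A'' → B` and `A'' → A' → T`. This is the octahedral axiom, which is not available in a
category that is only assumed to be pretriangulated. It is available here for another reason: in
a t-filtration the shifts decrease strictly, so `A` lies in strictly lower cohomological degrees
than `B`, `X` and `T`. Hence `A' → X` is the truncation of `A'`, and the cone of `A → A''` and the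
object `B` are both the truncation of `A''`; the universal property identifies them.

Applying the refinement along a composition series of one factor (`HasCost.extend_of_length`) and
then along the t-filtration (`HasCost.of_tFiltration`) shows that every sum in the infimum defining
`tComplexity` also occurs in the infimum defining `complexity`.
-/

/- Common definitions: filtrations, categorical complexity and entropy,
(co-)t-structures, hearts/co-hearts, and associated entropy-type invariants. -/

open CategoryTheory CategoryTheory.Limits CategoryTheory.Pretriangulated Filter
open scoped ENNReal

universe w v u

namespace CatEnt

open CategoryTheory.Triangulated

/-! ### Distinguished triangles as extensions -/

section Triangles

variable {C : Type u} [Category.{v} C] [Preadditive C] [HasZeroObject C]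
  [HasShift C ℤ] [∀ n : ℤ, (shiftFunctor C n).Additive] [Pretriangulated C]

/-- `B` is an extension of `X` by `A`: there is a distinguished triangle `A → B → X → A⟦1⟧`. -/
def IsExtension (A B X : C) : Prop :=
  ∃ (f : A ⟶ B) (g : B ⟶ X) (h : X ⟶ A⟦(1 : ℤ)⟧), Triangle.mk f g h ∈ distTriang C

lemma IsExtension.of_triangle (T : Triangle C) (hT : T ∈ distTriang C) :
    IsExtension T.obj₁ T.obj₂ T.obj₃ :=
  ⟨T.mor₁, T.mor₂, T.mor₃, hT⟩

lemma IsExtension.of_iso {A B X A' B' X' : C} (h : IsExtension A B X)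
    (a : A ≅ A') (b : B ≅ B') (x : X ≅ X') : IsExtension A' B' X' := by
  obtain ⟨f, g, h, hT⟩ := h
  refine ⟨a.inv ≫ f ≫ b.hom, b.inv ≫ g ≫ x.hom, x.inv ≫ h ≫ a.hom⟦(1 : ℤ)⟧', ?_⟩
  refine isomorphic_distinguished _ hT _
    (Triangle.isoMk _ _ a.symm b.symm x.symm ?_ ?_ ?_)
  · change (a.inv ≫ f ≫ b.hom) ≫ b.inv = a.inv ≫ f
    rw [Category.assoc, Category.assoc, Iso.hom_inv_id, Category.comp_id]
  · change (b.inv ≫ g ≫ x.hom) ≫ x.inv = b.inv ≫ g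
    rw [Category.assoc, Category.assoc, Iso.hom_inv_id, Category.comp_id]
  · change (x.inv ≫ h ≫ a.hom⟦(1 : ℤ)⟧') ≫ a.inv⟦(1 : ℤ)⟧' = x.inv ≫ h
    rw [Category.assoc, Category.assoc, ← Functor.map_comp, Iso.hom_inv_id,
      CategoryTheory.Functor.map_id, Category.comp_id]

lemma IsExtension.shift {A B X : C} (h : IsExtension A B X) (k : ℤ) :
    IsExtension (A⟦k⟧) (B⟦k⟧) (X⟦k⟧) := by
  obtain ⟨f, g, h, hT⟩ := h
  exact IsExtension.of_triangle _ (Triangle.shift_distinguished _ hT k)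

lemma IsExtension.biprod {A B X A' B' X' : C}
    (h : IsExtension A B X) (h' : IsExtension A' B' X') :
    IsExtension (A ⊞ A') (B ⊞ B') (X ⊞ X') := by
  obtain ⟨f, g, h, hT⟩ := h
  obtain ⟨f', g', h', hT'⟩ := h'
  let T : WalkingPair → Triangle C :=
    fun j => WalkingPair.casesOn j (Triangle.mk f g h) (Triangle.mk f' g' h')
  have hP := productTriangle_distinguished T (by rintro (_ | _); exacts [hT, hT'])
  have key : ∀ (F : WalkingPair → C), Nonempty ((∏ᶜ F) ≅ F .left ⊞ F .right) := fun F =>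
    ⟨(HasLimit.isoOfNatIso (Discrete.natIso (by
        rintro ⟨_ | _⟩ <;> exact Iso.refl _)) : ∏ᶜ F ≅ F .left ⨯ F .right) ≪≫
      (biprod.isoProd _ _).symm⟩
  obtain ⟨e₁⟩ := key (fun j => (T j).obj₁)
  obtain ⟨e₂⟩ := key (fun j => (T j).obj₂)
  obtain ⟨e₃⟩ := key (fun j => (T j).obj₃)
  exact (IsExtension.of_triangle _ hP).of_iso e₁ e₂ e₃

lemma isExtension_biprod (A X : C) : IsExtension A (A ⊞ X) X :=
  IsExtension.of_triangle _ (binaryBiproductTriangle_distinguished A X)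

/-- `S i` is a summand of `⨁ S` with a complement: the fibre of the split epimorphism
`⨁ S ⟶ S i`. -/
lemma exists_biproduct_complement {n : ℕ} (S : Fin n → C) (i : Fin n) :
    ∃ Z : C, Nonempty (S i ⊞ Z ≅ ⨁ S) := by
  obtain ⟨Z, f, h, hT⟩ := distinguished_cocone_triangle₁ (biproduct.π S i)
  have h0 : h = 0 := Triangle.mor₃_eq_zero_of_epi₂ _ hT
    (show Epi (biproduct.π S i) from inferInstance)
  obtain ⟨e, -⟩ := exists_iso_binaryBiproduct_of_distTriang _ hT h0
  exact ⟨Z, ⟨biprod.braiding _ _ ≪≫ e.symm⟩⟩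

end Triangles

/-! ### Refinement of extensions by truncation -/

section Refinement

variable {C : Type u} [Category.{v} C] [Preadditive C] [HasZeroObject C]
  [HasShift C ℤ] [∀ n : ℤ, (shiftFunctor C n).Additive] [Pretriangulated C]

-- The exactness lemmas of Mathlib for triangles, with the components of `Triangle.mk f g h` written out
-- so that the resulting equations can be used by `rw`.
section LongExactSequences

variable {A B X W : C} {f : A ⟶ B} {g : B ⟶ X} {h : X ⟶ A⟦(1 : ℤ)⟧}
  (hT : Triangle.mk f g h ∈ distTriang C)
include hT

lemma comp_zero₁₂ : f ≫ g = 0 := comp_distTriang_mor_zero₁₂ _ hT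

lemma comp_zero₂₃ : g ≫ h = 0 := comp_distTriang_mor_zero₂₃ _ hT

lemma comp_zero₃₁ : h ≫ f⟦(1 : ℤ)⟧' = 0 := comp_distTriang_mor_zero₃₁ _ hT

lemma yoneda₂ (u : B ⟶ W) (hu : f ≫ u = 0) : ∃ v : X ⟶ W, u = g ≫ v :=
  Triangle.yoneda_exact₂ _ hT u hu

lemma yoneda₃ (u : X ⟶ W) (hu : g ≫ u = 0) : ∃ v : A⟦(1 : ℤ)⟧ ⟶ W, u = h ≫ v :=
  Triangle.yoneda_exact₃ _ hT u hu

/-- Exactness at `X`, the factorization being a shifted morphism because shifting is full. -/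
lemma yoneda₃' (u : X ⟶ W⟦(1 : ℤ)⟧) (hu : g ≫ u = 0) :
    ∃ v : A ⟶ W, u = h ≫ v⟦(1 : ℤ)⟧' := by
  obtain ⟨v', hv'⟩ := yoneda₃ hT u hu
  obtain ⟨v, rfl⟩ := (shiftFunctor C (1 : ℤ)).map_surjective v'
  exact ⟨v, hv'⟩

/-- Exactness at `A`, obtained from the rotated triangle by undoing the shift. -/
lemma yoneda₁ (u : A ⟶ W) (hu : h ≫ u⟦(1 : ℤ)⟧' = 0) : ∃ v : B ⟶ W, u = f ≫ v := by
  have hT' : Triangle.mk g h (-f⟦(1 : ℤ)⟧') ∈ distTriang C := rot_of_distTriang _ hT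
  obtain ⟨v, hv⟩ := yoneda₃' hT' _ hu
  refine ⟨-v, (shiftFunctor C (1 : ℤ)).map_injective ?_⟩
  rw [hv, Functor.map_comp, Functor.map_neg, Preadditive.neg_comp, Preadditive.comp_neg]

lemma coyoneda₂ (u : W ⟶ B) (hu : u ≫ g = 0) : ∃ v : W ⟶ A, u = v ≫ f :=
  Triangle.coyoneda_exact₂ _ hT u hu

lemma coyoneda₃ (u : W ⟶ X) (hu : u ≫ h = 0) : ∃ v : W ⟶ B, u = v ≫ g :=
  Triangle.coyoneda_exact₃ _ hT u hu

lemma coyoneda₄ (u : W ⟶ A⟦(1 : ℤ)⟧) (hu : u ≫ f⟦(1 : ℤ)⟧' = 0) : ∃ v : W ⟶ X, u = v ≫ h :=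
  Triangle.coyoneda_exact₁ _ hT u hu

lemma coyoneda₁ (u : W ⟶ A) (hu : u ≫ f = 0) :
    ∃ (v : W ⟶ X⟦(-1 : ℤ)⟧) (w : X⟦(-1 : ℤ)⟧ ⟶ A), u = v ≫ w := by
  obtain ⟨l, hl⟩ := Triangle.coyoneda_exact₂ _ (inv_rot_of_distTriang _ hT) u hu
  exact ⟨l, _, hl⟩

end LongExactSequences

/-- The octahedron for `A' ⟶ X ⟶ T`, valid without the octahedral axiom when `A` is in degrees
`≤ n₀ = n - 1` and `B`, `X`, `T` are in degrees `≥ n`. -/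
lemma exists_refinement (t : TStructure C) (n₀ n : ℤ) (hn : n₀ + 1 = n)
    {A A' X B T : C} (hA : t.IsLE A n₀) (hB : t.IsGE B n) (hX : t.IsGE X n) (hT : t.IsGE T n)
    (h₁ : IsExtension A A' X) (h₂ : IsExtension B X T) :
    ∃ A'' : C, IsExtension A A'' B ∧ IsExtension A'' A' T := by
  obtain ⟨a, p, x, hpx⟩ := h₁
  obtain ⟨j, q, e, hjq⟩ := h₂
  obtain ⟨A'', i, d, hid⟩ := distinguished_cocone_triangle₁ (p ≫ q)
  have hA1 := t.isLE_shift A n₀ 1 (n₀ - 1)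
  have hT1 := t.isGE_shift T n (-1) (n + 1)
  -- `i` is injective on maps out of objects `≤ n₀`
  have inj_i : ∀ {V : C}, t.IsLE V n₀ → ∀ g : V ⟶ A'', g ≫ i = 0 → g = 0 := by
    intro V hV g hg
    obtain ⟨l, w, rfl⟩ := coyoneda₁ hid g hg
    rw [t.zero_of_isLE_of_isGE l n₀ (n + 1) (by lia) hV hT1, zero_comp]
  obtain ⟨a', ha'⟩ : ∃ a' : A ⟶ A'', a = a' ≫ i :=
    coyoneda₂ hid a (by rw [← Category.assoc, comp_zero₁₂ hpx, zero_comp])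
  obtain ⟨b, hb₁, hb₂⟩ : ∃ b : A'' ⟶ B, i ≫ p = b ≫ j ∧ d ≫ b⟦(1 : ℤ)⟧' = 𝟙 T ≫ e :=
    complete_distinguished_triangle_morphism₁ _ _ hid hjq p (𝟙 T) (Category.comp_id (p ≫ q))
  rw [Category.id_comp] at hb₂
  -- `p` is the reflection of `A'` into the objects `≥ n`
  have fac_p : ∀ {W : C}, t.IsGE W n → ∀ g : A' ⟶ W, ∃ s : X ⟶ W, g = p ≫ s := by
    intro W hW g
    exact yoneda₂ hpx g (t.zero_of_isLE_of_isGE _ n₀ n (by lia) hA hW)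
  have inj_p : ∀ {W : C}, t.IsGE W (n - 1) → ∀ g : X ⟶ W, p ≫ g = 0 → g = 0 := by
    intro W hW g hg
    obtain ⟨l, rfl⟩ := yoneda₃ hpx g hg
    rw [t.zero_of_isLE_of_isGE l (n₀ - 1) (n - 1) (by lia) hA1 hW, comp_zero]
  -- `b` is the reflection of `A''` into the objects `≥ n`, by a diagram chase
  have sur_b : ∀ {W : C}, t.IsGE W n → ∀ g : A'' ⟶ W, ∃ s : B ⟶ W, g = b ≫ s := by
    intro W hW g
    have hW1 := t.isGE_shift W n 1 (n - 1)
    have h0 : q ≫ d ≫ g⟦(1 : ℤ)⟧' = 0 := by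
      apply inj_p hW1
      rw [← Category.assoc, ← Category.assoc, comp_zero₂₃ hid, zero_comp]
    obtain ⟨h, hh⟩ := yoneda₃' hjq _ h0
    obtain ⟨r, hr⟩ := yoneda₁ hid (g - b ≫ h) (by
      rw [Functor.map_sub, Functor.map_comp, Preadditive.comp_sub, reassoc_of% hb₂, hh, sub_self])
    obtain ⟨s, rfl⟩ := fac_p hW r
    refine ⟨h + j ≫ s, ?_⟩
    rw [Preadditive.comp_add, ← reassoc_of% hb₁, ← hr]
    abel
  have inj_b : ∀ {W : C}, t.IsGE W n → ∀ g : B ⟶ W, b ≫ g = 0 → g = 0 := by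
    intro W hW g hg
    obtain ⟨r, rfl⟩ := yoneda₁ hjq g (by
      rw [← hb₂, Category.assoc, ← Functor.map_comp, hg, Functor.map_zero, comp_zero])
    obtain ⟨s, hs⟩ := yoneda₂ hid (p ≫ r) (by rw [reassoc_of% hb₁, hg])
    have h2 : r = q ≫ s := by
      rw [← sub_eq_zero]
      apply inj_p (t.isGE_of_ge W (n - 1) n)
      rw [Preadditive.comp_sub, hs, Category.assoc, sub_self]
    rw [h2, ← Category.assoc, comp_zero₁₂ hjq, zero_comp]
  obtain ⟨Y, y, z, hyz⟩ := distinguished_cocone_triangle a'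
  have hay : a' ≫ y = 0 := comp_zero₁₂ hyz
  -- the cone `Y` of `a'` is orthogonal to all objects `≤ n₀`
  have hY : t.IsGE Y n := by
    rw [t.isGE_iff_orthogonal n₀ n hn]
    intro V f hV
    have h0 : f ≫ z = 0 := by
      obtain ⟨g, hg⟩ := coyoneda₄ hpx (f ≫ z) (by
        rw [ha', Functor.map_comp, Category.assoc, ← Category.assoc z, comp_zero₃₁ hyz,
          zero_comp, comp_zero])
      rw [hg, t.zero_of_isLE_of_isGE g n₀ n (by lia) hV hX, zero_comp]
    obtain ⟨g, rfl⟩ := coyoneda₃ hyz f h0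
    obtain ⟨h, hh⟩ := coyoneda₂ hpx (g ≫ i)
      (t.zero_of_isLE_of_isGE _ n₀ n (by lia) hV hX)
    have h2 : g = h ≫ a' := by
      rw [← sub_eq_zero]
      apply inj_i hV
      rw [Preadditive.sub_comp, hh, Category.assoc, ← ha', sub_self]
    rw [h2, Category.assoc, hay, comp_zero]
  -- `y` and `b` are reflections of the same object, so `Y ≅ B`
  obtain ⟨c, hc⟩ := yoneda₂ hyz b (t.zero_of_isLE_of_isGE _ n₀ n (by lia) hA hB)
  obtain ⟨c', hc'⟩ := sur_b hY y
  refine ⟨A'', ?_, _, _, _, hid⟩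
  refine IsExtension.of_iso ⟨_, _, _, hyz⟩ (Iso.refl _) (Iso.refl _) ⟨c, c', ?_, ?_⟩
  · rw [← sub_eq_zero]
    obtain ⟨l, hl⟩ := yoneda₃ hyz (c ≫ c' - 𝟙 Y) (by
      rw [Preadditive.comp_sub, ← reassoc_of% hc, ← hc', Category.comp_id, sub_self])
    rw [hl, t.zero_of_isLE_of_isGE l (n₀ - 1) n (by lia) hA1 hY, comp_zero]
  · rw [← sub_eq_zero]
    apply inj_b hB
    rw [Preadditive.comp_sub, ← reassoc_of% hc', ← hc, Category.comp_id, sub_self]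

end Refinement

/-! ### Filtrations and costs -/

section Filtrations

variable {C : Type u} [Category.{v} C] [Preadditive C] [HasZeroObject C]
  [HasShift C ℤ] [∀ n : ℤ, (shiftFunctor C n).Additive] [Pretriangulated C]

lemma hasFiltration_zero_iff {F : C} {X : Fin 0 → C} :
    HasFiltrationIn C Set.univ F X ↔ IsZero F := by
  constructor
  · rintro ⟨A, h0, ⟨e⟩, -, -⟩
    exact h0.of_iso e.symm
  · intro h
    exact ⟨fun _ => F, h, ⟨Iso.refl _⟩, fun _ => trivial, fun i => i.elim0⟩

lemma hasFiltration_succ_iff {m : ℕ} {F : C} {X : Fin (m + 1) → C} :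
    HasFiltrationIn C Set.univ F X ↔
      ∃ A : C, HasFiltrationIn C Set.univ A (fun i : Fin m => X i.castSucc) ∧
        IsExtension A F (X (Fin.last m)) := by
  constructor
  · rintro ⟨A, h0, ⟨e⟩, -, h⟩
    refine ⟨A (Fin.last m).castSucc, ⟨fun i => A i.castSucc, h0, ⟨Iso.refl _⟩,
      fun _ => trivial, fun i => ?_⟩, ?_⟩
    · exact h i.castSucc
    · exact IsExtension.of_iso (h (Fin.last m)) (Iso.refl _) e (Iso.refl _)
  · rintro ⟨F', ⟨A, h0, ⟨e⟩, -, h⟩, hF⟩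
    refine ⟨Fin.snoc (α := fun _ => C) A F, ?_, ⟨eqToIso (by simp)⟩, fun _ => trivial,
      fun i => ?_⟩
    · rw [← Fin.castSucc_zero, Fin.snoc_castSucc]
      exact h0
    · change IsExtension _ _ _
      induction i using Fin.lastCases with
      | last =>
        rw [Fin.snoc_castSucc, Fin.succ_last, Fin.snoc_last]
        exact hF.of_iso e.symm (Iso.refl _) (Iso.refl _)
      | cast i =>
        rw [Fin.snoc_castSucc, Fin.succ_castSucc, Fin.snoc_castSucc]
        exact h i

/-- The real number `c` is one of the sums over which the infimum defining `complexity C t G F` is taken. -/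
def HasCost (t : ℝ) (G F : C) (c : ℝ) : Prop :=
  ∃ (m : ℕ) (k : Fin m → ℤ) (F' : C),
    HasFiltrationIn C Set.univ (F ⊞ F') (fun i => G⟦k i⟧) ∧
    c = ∑ i, Real.exp ((k i : ℝ) * t)

lemma HasCost.complexity_le {t : ℝ} {G F : C} {c : ℝ} (h : HasCost t G F c) :
    complexity C t G F ≤ ENNReal.ofReal c := by
  obtain ⟨m, k, F', hF, rfl⟩ := h
  exact sInf_le ⟨m, k, F', trivial, hF, rfl⟩

lemma HasCost.of_iso {t : ℝ} {G F F₁ : C} {c : ℝ} (h : HasCost t G F c) (e : F ≅ F₁) :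
    HasCost t G F₁ c := by
  obtain ⟨m, k, F', ⟨A, h0, ⟨e'⟩, h⟩, hc⟩ := h
  exact ⟨m, k, F', ⟨A, h0, ⟨e' ≪≫ biprod.mapIso e (Iso.refl _)⟩, h⟩, hc⟩

lemma HasCost.of_isZero {t : ℝ} {G F : C} (h : IsZero F) : HasCost t G F 0 :=
  ⟨0, Fin.elim0, F, hasFiltration_zero_iff.2 (by simpa using h), by simp⟩

/-- An extension by `(S i)⟦k⟧` raises the cost by `exp (k * t)`: adding a shifted complement of
`S i` in `⨁ S` turns the new factor into `(⨁ S)⟦k⟧`. -/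
lemma HasCost.extend {t : ℝ} {n : ℕ} {S : Fin n → C} {A F : C} {c : ℝ}
    (h : HasCost t (⨁ S) A c) (i : Fin n) (k : ℤ) (hF : IsExtension A F ((S i)⟦k⟧)) :
    HasCost t (⨁ S) F (c + Real.exp (k * t)) := by
  obtain ⟨m, ks, A', hA, rfl⟩ := h
  obtain ⟨Z, ⟨e⟩⟩ := exists_biproduct_complement S i
  refine ⟨m + 1, Fin.snoc (α := fun _ => ℤ) ks k, A' ⊞ Z⟦k⟧, ?_, ?_⟩
  · have := preservesBinaryBiproducts_of_preservesBinaryProducts (shiftFunctor C k)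
    rw [hasFiltration_succ_iff]
    refine ⟨A ⊞ A', by simpa using hA, ?_⟩
    rw [Fin.snoc_last]
    exact (hF.biprod (isExtension_biprod A' (Z⟦k⟧))).of_iso (Iso.refl _) (Iso.refl _)
      (((shiftFunctor C k).mapBiprod (S i) Z).symm ≪≫ (shiftFunctor C k).mapIso e)
  · simp [Fin.sum_univ_castSucc]

end Filtrations

/-! ### From t-filtrations to filtrations by simple objects -/

section TStructures

variable {C : Type u} [Category.{v} C] [Preadditive C] [HasZeroObject C]
  [HasShift C ℤ] [∀ n : ℤ, (shiftFunctor C n).Additive] [Pretriangulated C]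

/-- The Mathlib t-structure attached to a t-structure given by its aisle `le = D^{≤ 0}` and
coaisle `ge = D^{≥ 0}`; its degree `n` parts are the classes of `X` with `X⟦n⟧` in `le`,
resp. `ge`. -/
def toTStructure {le ge : Set C} (ht : IsTStructureIn C Set.univ le ge) : TStructure C where
  le n X := X⟦n⟧ ∈ le
  ge n X := X⟦n⟧ ∈ ge
  le_isClosedUnderIsomorphisms n := ⟨fun e h => ht.le_iso ((shiftFunctor C n).mapIso e) h⟩
  ge_isClosedUnderIsomorphisms n := ⟨fun e h => ht.ge_iso ((shiftFunctor C n).mapIso e) h⟩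
  le_shift n a n' h X hX := ht.le_iso ((shiftFunctorAdd' C a n' n h).app X) hX
  ge_shift n a n' h X hX := ht.ge_iso ((shiftFunctorAdd' C a n' n h).app X) hX
  zero' X Y f hX hY :=
    ht.hom_zero X (ht.le_iso ((shiftFunctorZero C ℤ).app X) hX) Y hY f
  le_zero_le X hX :=
    ht.shift_le X (ht.le_iso ((shiftFunctorZero C ℤ).app X) hX)
  ge_one_le X hX :=
    ht.ge_iso ((shiftFunctorAdd' C (1 : ℤ) (-1) 0 (by lia)).symm.app X) (ht.shift_ge _ hX)
  exists_triangle_zero_one A := by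
    obtain ⟨D', F', hD, hF, f, g, h, hT⟩ := ht.exists_triangle A trivial
    exact ⟨D', F', ht.le_iso ((shiftFunctorZero C ℤ).symm.app D') hD, hF, f, g, h, hT⟩

variable {le ge : Set C} (ht : IsTStructureIn C Set.univ le ge)

lemma isLE_of_mem_heart {X : C} (hX : X ∈ heart C le ge) : (toTStructure ht).IsLE X 0 :=
  ⟨ht.le_iso ((shiftFunctorZero C ℤ).symm.app X) hX.1⟩

lemma isGE_of_mem_heart {X : C} (hX : X ∈ heart C le ge) : (toTStructure ht).IsGE X 0 :=
  ⟨ht.ge_iso ((shiftFunctorZero C ℤ).symm.app X) hX.2⟩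

lemma isGE_of_filtration {m : ℕ} {F : C} {X : Fin m → C} (t : TStructure C) (n : ℤ)
    (hX : ∀ i, t.IsGE (X i) n) (hF : HasFiltrationIn C Set.univ F X) : t.IsGE F n := by
  induction m generalizing F with
  | zero =>
    rw [t.isGE_iff_orthogonal (n - 1) n (by lia)]
    exact fun _ _ _ => (hasFiltration_zero_iff.1 hF).eq_of_tgt _ _
  | succ m ih =>
    obtain ⟨A, hA, _, _, _, hT⟩ := hasFiltration_succ_iff.1 hF
    exact t.isGE₂ _ hT n (ih (fun i => hX _) hA) (hX _)

lemma isLE_of_filtration {m : ℕ} {F : C} {X : Fin m → C} (t : TStructure C) (n : ℤ)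
    (hX : ∀ i, t.IsLE (X i) n) (hF : HasFiltrationIn C Set.univ F X) : t.IsLE F n := by
  induction m generalizing F with
  | zero =>
    rw [t.isLE_iff_orthogonal n (n + 1) rfl]
    exact fun _ _ _ => (hasFiltration_zero_iff.1 hF).eq_of_src _ _
  | succ m ih =>
    obtain ⟨A, hA, _, _, _, hT⟩ := hasFiltration_succ_iff.1 hF
    exact t.isLE₂ _ hT n (ih (fun i => hX _) hA) (hX _)

/-- An extension of `A` by `X⟦k⟧`, with `X` of length `l` in the heart and `A` in degrees `< -k`,
raises the cost by `l * exp (k * t)`. By induction on `l`, the top simple factor of `X` being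
split off with `exists_refinement`. -/
lemma HasCost.extend_of_length {n : ℕ} {S : Fin n → C}
    (hcomplete : ∀ T, SimpleIn C (heart C le ge) T → ∃ i, Nonempty (T ≅ S i))
    {t : ℝ} (k : ℤ) (l : ℕ) {A F X : C} {c : ℝ}
    (hA : (toTStructure ht).IsLE A (-k - 1)) (hc : HasCost t (⨁ S) A c)
    (hX : HasLengthIn C (heart C le ge) X l) (hF : IsExtension A F (X⟦k⟧)) :
    HasCost t (⨁ S) F (c + l * Real.exp (k * t)) := by
  induction l generalizing F X with
  | zero =>
    obtain ⟨Q, -, hQ⟩ := hX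
    obtain ⟨f, g, h, hT⟩ := hF
    have hz : IsZero (X⟦k⟧) := Functor.map_isZero _ (hasFiltration_zero_iff.1 hQ)
    have : IsIso f := (Triangle.isZero₃_iff_isIso₁ _ hT).1 hz
    simpa using hc.of_iso (asIso f)
  | succ l ih =>
    obtain ⟨Q, hQ, hfil⟩ := hX
    have hQ0 := fun i => isGE_of_mem_heart ht (hQ i).1
    have hX0 := isGE_of_filtration _ 0 hQ0 hfil
    obtain ⟨B, hB, hBX⟩ := hasFiltration_succ_iff.1 hfil
    have hB0 := isGE_of_filtration _ 0 (fun i => hQ0 _) hB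
    have sh : ∀ {W : C}, (toTStructure ht).IsGE W 0 → (toTStructure ht).IsGE (W⟦k⟧) (-k) :=
      fun _ => (toTStructure ht).isGE_shift _ 0 k (-k)
    obtain ⟨A'', h₁, h₂⟩ := exists_refinement (toTStructure ht) (-k - 1) (-k) (by lia) hA
      (sh hB0) (sh hX0) (sh (hQ0 _)) hF (hBX.shift k)
    obtain ⟨i, ⟨e⟩⟩ := hcomplete _ (hQ (Fin.last l))
    have := (ih ⟨_, fun i => hQ i.castSucc, hB⟩ h₁).extend i k
      (h₂.of_iso (Iso.refl _) (Iso.refl _) ((shiftFunctor C k).mapIso e))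
    convert this using 1
    push_cast
    ring

/-- The sum attached to a t-filtration of `E` is a cost of `E`. Strict decrease of the shifts is
what provides the degree bound in `HasCost.extend_of_length`. -/
lemma HasCost.of_tFiltration (ht : IsTStructureIn C Set.univ le ge) {n : ℕ} {S : Fin n → C}
    (hcomplete : ∀ T, SimpleIn C (heart C le ge) T → ∃ i, Nonempty (T ≅ S i))
    {t : ℝ} {m : ℕ} {E : C} {k : Fin m → ℤ} {X : Fin m → C} {lam : Fin m → ℕ}
    (hk : StrictAnti k) (hX : ∀ i, X i ∈ heart C le ge)
    (hlam : ∀ i, HasLengthIn C (heart C le ge) (X i) (lam i))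
    (hE : HasFiltrationIn C Set.univ E (fun i => (X i)⟦k i⟧)) :
    HasCost t (⨁ S) E (∑ i, (lam i : ℝ) * Real.exp ((k i : ℝ) * t)) := by
  induction m generalizing E with
  | zero => simpa using HasCost.of_isZero (hasFiltration_zero_iff.1 hE)
  | succ m ih =>
    obtain ⟨A, hA, hAE⟩ := hasFiltration_succ_iff.1 hE
    rw [Fin.sum_univ_castSucc]
    refine HasCost.extend_of_length ht hcomplete _ _ ?_ ?_ (hlam _) hAE
    · refine isLE_of_filtration _ _ (fun i => ?_) hA
      have h0 := isLE_of_mem_heart ht (hX i.castSucc)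
      have h1 := (toTStructure ht).isLE_shift (X i.castSucc) 0 (k i.castSucc) (-k i.castSucc)
      have h2 := hk (Fin.castSucc_lt_last i)
      exact (toTStructure ht).isLE_of_le _ (-k i.castSucc) _
    · exact ih (hk.comp_strictMono (Fin.strictMono_castSucc)) (fun i => hX _)
        (fun i => hlam _) hA

end TStructures

end CatEnt

open CatEnt

/-- for a bounded t-structure `𝔞 = (le, ge)` with finite heart `H` on
a `K`-linear idempotent complete triangulated category `D`, if `S 0, …, S (n-1)` is
a complete set of pairwise non-isomorphic simple objects of `H` and
`S := S 0 ⊕ ⋯ ⊕ S (n-1)`, then `δ̂_t^𝔞(E) ≥ δ_t(S, E)` for every `E` and `t`. -/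
theorem tComplexity_ge_complexity_simples
    (K : Type w) [Field K]
    (D : Type u) [Category.{v} D] [Preadditive D] [CategoryTheory.Linear K D]
    [HasZeroObject D] [HasShift D ℤ] [∀ n : ℤ, (shiftFunctor D n).Additive]
    [Pretriangulated D] [HasFiniteBiproducts D] [IsIdempotentComplete D]
    (le ge : Set D)
    (ht : IsTStructureIn D Set.univ le ge)
    (hbd : IsBoundedIn D Set.univ le ge)
    (hfin : FiniteHeart D (heart D le ge))
    (n : ℕ) (S : Fin n → D)
    (hsimple : ∀ i, SimpleIn D (heart D le ge) (S i))
    (hpair : ∀ i j, i ≠ j → IsEmpty (S i ≅ S j))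
    (hcomplete : ∀ T, SimpleIn D (heart D le ge) T → ∃ i, Nonempty (T ≅ S i))
    (E : D) (t : ℝ) :
    complexity D t (⨁ S) E ≤ tComplexity D (heart D le ge) t E := by
  refine le_sInf ?_
  rintro _ ⟨m, k, X, lam, hk, hX, hlam, hE, rfl⟩
  exact (HasCost.of_tFiltration ht hcomplete hk hX hlam hE).complexity_le
end
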